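/- arXiv:1512.07569 — 2 statements merged into one kernel-verified Lean document; each statement's English description precedes it below -/
import Mathlib

section
/- The smoothed function f_μ(x) := μ ln Σ_j exp(λ_j(x)/μ) is convex on E, and its gradient satisfies ‖∇f_μ(x) − ∇f_μ(y)‖*_∞ ≤ (1/μ)‖x − y‖_∞ for all x, y ∈ E, where ‖g‖*_∞ := sup{⟨g, v⟩ : ‖v‖_∞ ≤ 1}. -/
open RealInnerProductSpace
open Filter Topology

/-- `v` is a vector of roots of `t ↦ p (z - t e)`. -/
def RVec {d n : ℕ} (p : (Fin d → ℂ) → ℂ) (e z : Fin d → ℂ) (v : Fin n → ℂ) : Prop :=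
  ∀ t : ℂ, p (z - t • e) = p e * ∏ j, (v j - t)

/-- Complex coordinates of a real vector. -/
def cx {d : ℕ} (x : Fin d → ℝ) : Fin d → ℂ := fun i => (x i : ℂ)

/-- Hyperbolic data over the complex numbers. -/
structure HypData (d n : ℕ) (p : (Fin d → ℂ) → ℂ) (e : Fin d → ℂ) : Prop where
  hom : ∀ (a : ℂ) (z : Fin d → ℂ), p (a • z) = a ^ n * p z
  diff : Differentiable ℂ p
  pe : p e ≠ 0
  split : ∀ z, ∃ v : Fin n → ℂ, RVec p e z v
  real : ∀ (x : Fin d → ℝ) (v : Fin n → ℂ), RVec p e (cx x) v → ∀ j, (v j).im = 0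
  conj : ∀ z, p (fun i => star (z i)) = star (p z)
  econj : ∀ i, star (e i) = e i

namespace HypData

variable {d n : ℕ} {p : (Fin d → ℂ) → ℂ} {e : Fin d → ℂ}

lemma rsmul (h : HypData d n p e) {z : Fin d → ℂ} {v : Fin n → ℂ} (hv : RVec p e z v) (a : ℂ) :
    RVec p e (a • z) (fun j => a * v j) := by
  intro t
  by_cases ha : a = 0
  · subst ha
    have : (0 : ℂ) • z - t • e = (-t) • e := by simp
    rw [this, h.hom]
    simp [mul_comm]
  · have : a • z - t • e = a • (z - (t / a) • e) := by
      rw [smul_sub, smul_smul, mul_div_cancel₀ _ ha]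
    rw [this, h.hom, hv]
    have : ∀ j, a * v j - t = a * (v j - t / a) := by
      intro j; field_simp
    simp_rw [this, Finset.prod_mul_distrib]
    simp; ring

lemma rsub {z : Fin d → ℂ} {v : Fin n → ℂ} (hv : RVec p e z v) (s : ℂ) :
    RVec p e (z - s • e) (fun j => v j - s) := by
  intro t
  have : z - s • e - t • e = z - (s + t) • e := by rw [add_smul]; abel
  rw [this, hv]
  congr 1
  apply Finset.prod_congr rfl; intros; ring

lemma rconj (h : HypData d n p e) {z : Fin d → ℂ} {v : Fin n → ℂ} (hv : RVec p e z v) :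
    RVec p e (fun i => star (z i)) (fun j => star (v j)) := by
  intro t
  have he : p e = star (p e) := by
    rw [← h.conj]; congr 1; funext i; exact (h.econj i).symm
  have h1 : (fun i => star (z i)) - t • e = fun i => star ((z - (star t) • e) i) := by
    funext i; simp only [Pi.sub_apply, Pi.smul_apply, smul_eq_mul, star_sub, star_mul', star_star]
    rw [h.econj]
  rw [h1, h.conj, hv, star_mul', ← he, star_prod]
  simp

lemma runiq (h : HypData d n p e) {z : Fin d → ℂ} {v v' : Fin n → ℂ} (hv : RVec p e z v)
    (hv' : RVec p e z v') :
    Multiset.map v Finset.univ.val = Multiset.map v' Finset.univ.val := by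
  have key : ∀ t, ∏ j, (t - v j) = ∏ j, (t - v' j) := by
    intro t
    have h1 := (hv t).symm.trans (hv' t)
    have h2 := mul_left_cancel₀ h.pe h1
    have h3 : ∀ u : Fin n → ℂ, ∏ j, (t - u j) = (-1) ^ n * ∏ j, (u j - t) := by
      intro u
      have : ∀ j, t - u j = (-1) * (u j - t) := by intro j; ring
      simp_rw [this, Finset.prod_mul_distrib]; simp
    rw [h3, h3, h2]
  have hp : (Multiset.map (fun a => Polynomial.X - Polynomial.C a)
      (Multiset.map v Finset.univ.val)).prod = (Multiset.map (fun a => Polynomial.X - Polynomial.C a)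
      (Multiset.map v' Finset.univ.val)).prod := by
    apply Polynomial.funext
    intro t
    have := key t
    simp only [Multiset.map_map]
    change Polynomial.eval t (∏ j, (Polynomial.X - Polynomial.C (v j)))
      = Polynomial.eval t (∏ j, (Polynomial.X - Polynomial.C (v' j)))
    simpa [Polynomial.eval_prod] using this
  rw [← Polynomial.roots_multiset_prod_X_sub_C (Multiset.map v Finset.univ.val), hp,
    Polynomial.roots_multiset_prod_X_sub_C]

lemma sum_eq (h : HypData d n p e) {z : Fin d → ℂ} {v v' : Fin n → ℂ} (hv : RVec p e z v)
    (hv' : RVec p e z v') {M : Type*} [AddCommMonoid M] (g : ℂ → M) :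
    ∑ j, g (v j) = ∑ j, g (v' j) := by
  have := congrArg (fun s => (Multiset.map g s).sum) (h.runiq hv hv')
  simp only [Multiset.map_map] at this
  exact this

lemma prod_eq (h : HypData d n p e) {z : Fin d → ℂ} {v v' : Fin n → ℂ} (hv : RVec p e z v)
    (hv' : RVec p e z v') {M : Type*} [CommMonoid M] (g : ℂ → M) :
    ∏ j, g (v j) = ∏ j, g (v' j) := by
  have := congrArg (fun s => (Multiset.map g s).prod) (h.runiq hv hv')
  simp only [Multiset.map_map] at this
  exact this

lemma rbound (h : HypData d n p e) : ∃ B : ℝ, 0 ≤ B ∧ ∀ (z : Fin d → ℂ) (v : Fin n → ℂ),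
    RVec p e z v → ∀ j, ‖v j‖ ≤ B * ‖z‖ := by
  have hne : p (-e) ≠ 0 := by
    have : -e = (-1 : ℂ) • e := by simp
    rw [this, h.hom]
    exact mul_ne_zero (pow_ne_zero _ (by norm_num)) h.pe
  have hcont : ContinuousAt (fun z => p (z - e)) 0 := by
    have : Continuous (fun z => p (z - e)) := h.diff.continuous.comp (by fun_prop)
    exact this.continuousAt
  have hev : ∀ᶠ z in 𝓝 (0 : Fin d → ℂ), p (z - e) ≠ 0 := by
    apply hcont.eventually_ne; simpa using hne
  obtain ⟨δ, hδ, hb⟩ := Metric.eventually_nhds_iff.1 hev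
  refine ⟨1 / δ, by positivity, fun z v hv j => ?_⟩
  by_contra hlt
  push Not at hlt
  have hpos : 0 < ‖v j‖ := lt_of_le_of_lt (by positivity) hlt
  have hvj : v j ≠ 0 := norm_pos_iff.1 hpos
  have h0 : p (z - (v j) • e) = 0 := by
    rw [hv, Finset.prod_eq_zero (Finset.mem_univ j) (sub_self _), mul_zero]
  have h1 : z - (v j) • e = (v j) • ((v j)⁻¹ • z - e) := by
    rw [smul_sub, smul_smul, mul_inv_cancel₀ hvj, one_smul]
  rw [h1, h.hom] at h0
  have h2 : p ((v j)⁻¹ • z - e) = 0 := by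
    rcases mul_eq_zero.1 h0 with h3 | h3
    · exact absurd h3 (pow_ne_zero _ hvj)
    · exact h3
  refine hb ?_ h2
  rw [dist_zero_right, norm_smul, norm_inv]
  rw [inv_mul_lt_iff₀ hpos]
  rw [one_div, inv_mul_lt_iff₀ hδ] at hlt
  linarith

/-- A chosen vector of roots. -/
noncomputable def rv (h : HypData d n p e) (z : Fin d → ℂ) : Fin n → ℂ := (h.split z).choose

lemma rv_spec (h : HypData d n p e) (z : Fin d → ℂ) : RVec p e z (h.rv z) := (h.split z).choose_spec

lemma rcont (h : HypData d n p e) (g : ℂ → ℝ) (hg : Continuous g) :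
    Continuous (fun z => ∑ j, g (h.rv z j)) := by
  rw [continuous_iff_seqContinuous]
  intro u z hu
  apply tendsto_of_subseq_tendsto
  intro ns hns
  obtain ⟨B, hB0, hB⟩ := h.rbound
  have hun : Tendsto (fun k => u (ns k)) atTop (𝓝 z) := hu.comp hns
  obtain ⟨R, hR⟩ := hun.norm.bddAbove_range
  have hR' : ∀ k, ‖u (ns k)‖ ≤ R := fun k => hR ⟨k, rfl⟩
  have hmem : ∀ k, h.rv (u (ns k)) ∈ Metric.closedBall (0 : Fin n → ℂ) (B * |R|) := by
    intro k
    rw [mem_closedBall_zero_iff, pi_norm_le_iff_of_nonneg (by positivity)]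
    intro j
    refine (hB _ _ (h.rv_spec _) j).trans ?_
    exact mul_le_mul_of_nonneg_left ((hR' k).trans (le_abs_self _)) hB0
  obtain ⟨v, -, φ, hφ, hlim⟩ := (isCompact_closedBall (0 : Fin n → ℂ) (B * |R|)).tendsto_subseq hmem
  refine ⟨φ, ?_⟩
  have hrv : RVec p e z v := by
    intro t
    have h1 : Tendsto (fun k => p (u (ns (φ k)) - t • e)) atTop (𝓝 (p (z - t • e))) := by
      have : Continuous (fun z => p (z - t • e)) := h.diff.continuous.comp (by fun_prop)
      exact (this.tendsto z).comp (hun.comp hφ.tendsto_atTop)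
    have h2 : Tendsto (fun k => p (u (ns (φ k)) - t • e)) atTop (𝓝 (p e * ∏ j, (v j - t))) := by
      have : Continuous (fun w : Fin n → ℂ => p e * ∏ j, (w j - t)) := by fun_prop
      have := (this.tendsto v).comp hlim
      refine this.congr (fun k => ?_)
      exact (h.rv_spec _ t).symm
    exact tendsto_nhds_unique h1 h2
  have h3 : ∑ j, g (h.rv z j) = ∑ j, g (v j) := h.sum_eq (h.rv_spec z) hrv g
  have : Continuous (fun w : Fin n → ℂ => ∑ j, g (w j)) := by fun_prop
  change Tendsto _ _ (𝓝 (∑ j, g (h.rv z j)))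
  rw [h3]
  exact (this.tendsto v).comp hlim

end HypData

namespace HypData

variable {d n : ℕ} {p : (Fin d → ℂ) → ℂ} {e : Fin d → ℂ}

lemma prod_diff_roots (h : HypData d n p e) (a b : Fin d → ℂ) (s : Multiset ℂ) :
    Differentiable ℂ (fun ζ : ℂ => ∏ j, (s.map (fun β => h.rv (a + ζ • b) j - β)).prod) := by
  induction s using Multiset.induction with
  | empty => simp
  | cons β s ih =>
    simp only [Multiset.map_cons, Multiset.prod_cons, Finset.prod_mul_distrib]
    refine Differentiable.mul ?_ ih
    have : (fun ζ : ℂ => ∏ j, (h.rv (a + ζ • b) j - β))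
        = fun ζ : ℂ => (p e)⁻¹ * p (a + ζ • b - β • e) := by
      funext ζ
      rw [h.rv_spec (a + ζ • b) β, ← mul_assoc, inv_mul_cancel₀ h.pe, one_mul]
    rw [this]
    refine Differentiable.const_mul ?_ _
    refine h.diff.comp ?_
    fun_prop

lemma prod_diff_poly (h : HypData d n p e) (a b : Fin d → ℂ) (φ : Polynomial ℂ) :
    Differentiable ℂ (fun ζ : ℂ => ∏ j, φ.eval (h.rv (a + ζ • b) j)) := by
  have h1 := (IsAlgClosed.splits φ).eq_prod_roots
  have h2 : ∀ t, φ.eval t = φ.leadingCoeff * (φ.roots.map (fun β => t - β)).prod := by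
    intro t
    conv_lhs => rw [h1]
    simp [Polynomial.eval_multiset_prod, Multiset.map_map]
  simp_rw [h2, Finset.prod_mul_distrib]
  exact (h.prod_diff_roots a b _).const_mul _

lemma prod_diff_lim (h : HypData d n p e) (a b : Fin d → ℂ) (φ : ℂ → ℂ) (hφ : Continuous φ)
    (φN : ℕ → Polynomial ℂ)
    (hlim : ∀ R ε : ℝ, 0 < ε → ∀ᶠ N in atTop, ∀ t : ℂ, ‖t‖ ≤ R → ‖(φN N).eval t - φ t‖ ≤ ε) :
    Differentiable ℂ (fun ζ : ℂ => ∏ j, φ (h.rv (a + ζ • b) j)) := by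
  obtain ⟨B, hB0, hB⟩ := h.rbound
  have hloc : TendstoLocallyUniformlyOn
      (fun (N : ℕ) (ζ : ℂ) => ∏ j, (φN N).eval (h.rv (a + ζ • b) j))
      (fun ζ : ℂ => ∏ j, φ (h.rv (a + ζ • b) j)) atTop Set.univ := by
    rw [tendstoLocallyUniformlyOn_univ, Metric.tendstoLocallyUniformly_iff]
    intro ε hε ζ₀
    set R : ℝ := B * (‖a‖ + (‖ζ₀‖ + 1) * ‖b‖) with hR
    obtain ⟨M, hM⟩ := (isCompact_closedBall (0 : ℂ) R).exists_bound_of_continuousOn hφ.continuousOn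
    have hcont : Continuous (fun w : Fin n → ℂ => ∏ j, w j) := by fun_prop
    have huc := (isCompact_closedBall (0 : Fin n → ℂ) (|M| + 1)).uniformContinuousOn_of_continuous
      hcont.continuousOn
    rw [Metric.uniformContinuousOn_iff] at huc
    obtain ⟨δ, hδ, huc⟩ := huc ε hε
    refine ⟨Metric.ball ζ₀ 1, Metric.ball_mem_nhds _ one_pos, ?_⟩
    filter_upwards [hlim R (min (δ / 2) 1) (by positivity)] with N hN ζ hζ
    have hz : ‖ζ‖ ≤ ‖ζ₀‖ + 1 := by
      rw [mem_ball_iff_norm] at hζ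
      have := norm_sub_norm_le ζ ζ₀
      linarith
    have hroot : ∀ j, ‖h.rv (a + ζ • b) j‖ ≤ R := by
      intro j
      refine (hB _ _ (h.rv_spec _) j).trans ?_
      refine mul_le_mul_of_nonneg_left ((norm_add_le _ _).trans ?_) hB0
      rw [norm_smul]
      gcongr
    have hb : ∀ j, ‖φ (h.rv (a + ζ • b) j)‖ ≤ |M| := fun j =>
      (hM _ (mem_closedBall_zero_iff.2 (hroot j))).trans (le_abs_self _)
    have hd : ∀ j, ‖(φN N).eval (h.rv (a + ζ • b) j) - φ (h.rv (a + ζ • b) j)‖ ≤ min (δ / 2) 1 :=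
      fun j => hN _ (hroot j)
    refine huc (fun j => φ (h.rv (a + ζ • b) j)) ?_
      (fun j => (φN N).eval (h.rv (a + ζ • b) j)) ?_ ?_
    · rw [mem_closedBall_zero_iff, pi_norm_le_iff_of_nonneg (by positivity)]
      intro j; linarith [hb j]
    · rw [mem_closedBall_zero_iff, pi_norm_le_iff_of_nonneg (by positivity)]
      intro j
      have h1 := (hd j).trans (min_le_right _ _)
      have h2 := norm_sub_norm_le ((φN N).eval (h.rv (a + ζ • b) j)) (φ (h.rv (a + ζ • b) j))
      linarith [hb j]
    · rw [dist_comm, dist_eq_norm]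
      refine lt_of_le_of_lt ?_ (half_lt_self hδ)
      rw [pi_norm_le_iff_of_nonneg (by positivity)]
      intro j
      exact (hd j).trans (min_le_left _ _)
  have := hloc.differentiableOn (Eventually.of_forall fun N =>
    (h.prod_diff_poly a b (φN N)).differentiableOn) isOpen_univ
  exact differentiableOn_univ.1 this

lemma prod_diff_exp (h : HypData d n p e) (a b : Fin d → ℂ) (α β m : ℂ) :
    Differentiable ℂ (fun ζ : ℂ => ∏ j, (α + β * Complex.exp (m * h.rv (a + ζ • b) j))) := by
  refine h.prod_diff_lim a b (fun t => α + β * Complex.exp (m * t)) (by fun_prop)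
    (fun N => Polynomial.C α + Polynomial.C β *
      ∑ k ∈ Finset.range N, Polynomial.C (m ^ k / (k.factorial : ℂ)) * Polynomial.X ^ k) ?_
  intro R ε hε
  have ht : Tendsto (fun N : ℕ => ‖β‖ * (Real.exp (‖m‖ * |R|) -
      ∑ k ∈ Finset.range N, (‖m‖ * |R|) ^ k / (k.factorial : ℝ))) atTop (𝓝 0) := by
    have h1 := (NormedSpace.expSeries_div_hasSum_exp (‖m‖ * |R|)).tendsto_sum_nat
    rw [← Real.exp_eq_exp_ℝ] at h1
    simpa using (h1.const_sub (Real.exp (‖m‖ * |R|))).const_mul ‖β‖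
  filter_upwards [ht.eventually (gt_mem_nhds hε)] with N hN t htR
  have e1 : (Polynomial.C α + Polynomial.C β *
      ∑ k ∈ Finset.range N, Polynomial.C (m ^ k / (k.factorial : ℂ)) * Polynomial.X ^ k).eval t
      - (α + β * Complex.exp (m * t))
      = - (β * (Complex.exp (m * t) - ∑ k ∈ Finset.range N, (m * t) ^ k / (k.factorial : ℂ))) := by
    simp only [Polynomial.eval_add, Polynomial.eval_C, Polynomial.eval_mul,
      Polynomial.eval_finsetSum, Polynomial.eval_pow, Polynomial.eval_X]
    have : ∀ k, m ^ k / (k.factorial : ℂ) * t ^ k = (m * t) ^ k / (k.factorial : ℂ) := by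
      intro k; rw [mul_pow]; ring
    simp_rw [this]; ring
  rw [e1, norm_neg, norm_mul]
  refine le_trans (mul_le_mul_of_nonneg_left ?_ (norm_nonneg _)) hN.le
  refine (Complex.norm_exp_sub_sum_le_exp_norm_sub_sum (m * t) N).trans ?_
  have hle : ‖m * t‖ ≤ ‖m‖ * |R| := by
    rw [norm_mul]; gcongr; exact htR.trans (le_abs_self _)
  have hs : ∀ y : ℝ, HasSum (fun k => y ^ (k + N) / ((k + N).factorial : ℝ))
      (Real.exp y - ∑ k ∈ Finset.range N, y ^ k / (k.factorial : ℝ)) := by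
    intro y
    have h1 := NormedSpace.expSeries_div_hasSum_exp y
    rw [← Real.exp_eq_exp_ℝ] at h1
    exact (hasSum_nat_add_iff' N).2 h1
  refine hasSum_le (fun k => ?_) (hs _) (hs _)
  gcongr

lemma sum_diff_exp (h : HypData d n p e) (a b : Fin d → ℂ) :
    Differentiable ℂ (fun ζ : ℂ => ∑ j, Complex.exp (h.rv (a + ζ • b) j)) := by
  classical
  have key : ∀ w : Fin n → ℂ, ∑ j, w j = ∑ i ∈ Finset.range (n + 1),
      (∏ j, (1 + (i : ℂ) * w j)) *
        (Lagrange.basis (Finset.range (n + 1)) (fun i : ℕ => (i : ℂ)) i).coeff 1 := by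
    intro w
    set D : Polynomial ℂ := ∏ j, (1 + Polynomial.C (w j) * Polynomial.X) with hD
    have hdeg : D.degree < (Finset.range (n + 1)).card := by
      refine lt_of_le_of_lt (Polynomial.degree_prod_le _ _) ?_
      refine lt_of_le_of_lt (Finset.sum_le_sum (g := fun _ => (1 : WithBot ℕ)) fun j _ => ?_) ?_
      · compute_degree
      · simp only [Finset.sum_const, Finset.card_univ, Fintype.card_fin, Finset.card_range]
        rw [nsmul_one]
        exact_mod_cast Nat.lt_succ_self n
    have hI := Lagrange.eq_interpolate (s := Finset.range (n + 1)) (v := fun i : ℕ => (i : ℂ))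
      (f := D) (Nat.cast_injective (R := ℂ)).injOn hdeg
    have hc : D.coeff 1 = ∑ j, w j := by
      have h1 : D.coeff 1 = D.derivative.eval 0 := by
        rw [← Polynomial.coeff_zero_eq_eval_zero, Polynomial.coeff_derivative]; simp
      rw [h1, hD, Polynomial.derivative_prod_finset, Polynomial.eval_finsetSum]
      apply Finset.sum_congr rfl
      intro j _
      simp [Polynomial.eval_prod]
    rw [← hc]
    conv_lhs => rw [hI]
    rw [Lagrange.interpolate_apply, Polynomial.finsetSum_coeff]
    apply Finset.sum_congr rfl
    intro i _
    rw [Polynomial.coeff_C_mul]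
    congr 1
    rw [hD, Polynomial.eval_prod]
    apply Finset.prod_congr rfl
    intro j _
    simp only [Polynomial.eval_add, Polynomial.eval_one, Polynomial.eval_mul, Polynomial.eval_C,
      Polynomial.eval_X]
    ring
  have : (fun ζ : ℂ => ∑ j, Complex.exp (h.rv (a + ζ • b) j)) = fun ζ : ℂ =>
      ∑ i ∈ Finset.range (n + 1), (∏ j, (1 + (i : ℂ) * Complex.exp (1 * h.rv (a + ζ • b) j))) *
        (Lagrange.basis (Finset.range (n + 1)) (fun i : ℕ => (i : ℂ)) i).coeff 1 := by
    funext ζ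
    rw [key]
    simp
  rw [this]
  refine Differentiable.fun_sum fun i _ => ?_
  exact (h.prod_diff_exp a b 1 i 1).mul_const _

end HypData


lemma pl_real (f : ℂ → ℂ) (hf : Differentiable ℂ f) (A B : ℝ)
    (hexp : ∀ z, ‖f z‖ ≤ A * Real.exp (B * ‖z‖)) (κ C : ℝ)
    (hre : ∀ ε > 0, ∃ A' : ℝ, ∀ᶠ a : ℝ in atTop, ‖f a‖ ≤ A' * Real.exp ((κ + ε) * a))
    (him : ∀ y : ℝ, ‖f (y * Complex.I)‖ ≤ C) (a : ℝ) (ha : 0 ≤ a) :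
    ‖f a‖ ≤ C * Real.exp (κ * a) := by
  have key : ∀ ε > 0, ‖f a‖ ≤ C * Real.exp ((κ + ε) * a) := by
    intro ε hε
    obtain ⟨A', hA'⟩ := hre ε hε
    have hg : ‖f a * Complex.exp (-((κ + ε : ℝ) : ℂ) * a)‖ ≤ C := by
      refine PhragmenLindelof.right_half_plane_of_bounded_on_real
        (f := fun z => f z * Complex.exp (-((κ + ε : ℝ) : ℂ) * z)) (z := (a : ℂ)) ?_ ?_ ?_ ?_ ?_
      · exact (hf.mul (by fun_prop)).diffContOnCl
      · refine ⟨1, by norm_num, B + |κ + ε|, ?_⟩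
        refine Asymptotics.IsBigO.of_bound A (Eventually.of_forall fun z => ?_)
        rw [norm_mul, Complex.norm_exp, Real.rpow_one, Real.norm_eq_abs, Real.abs_exp, add_mul,
          Real.exp_add, ← mul_assoc]
        refine mul_le_mul (hexp z) (Real.exp_le_exp.2 ?_) (Real.exp_pos _).le
          ((norm_nonneg _).trans (hexp z))
        refine (Complex.re_le_norm _).trans ?_
        rw [norm_mul, norm_neg, Complex.norm_real, Real.norm_eq_abs]
      · refine ⟨A', ?_⟩
        rw [eventually_map]
        filter_upwards [hA'] with x hx
        rw [norm_mul, Complex.norm_exp]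
        have : (-((κ + ε : ℝ) : ℂ) * x).re = -((κ + ε) * x) := by
          rw [← Complex.ofReal_neg, ← Complex.ofReal_mul, Complex.ofReal_re]; ring
        rw [this, Real.exp_neg, ← div_eq_mul_inv, div_le_iff₀ (Real.exp_pos _)]
        exact hx
      · intro y
        rw [norm_mul, Complex.norm_exp]
        have : (-((κ + ε : ℝ) : ℂ) * (y * Complex.I)).re = 0 := by simp
        rw [this, Real.exp_zero, mul_one]
        exact him y
      · simpa using ha
    rw [norm_mul, Complex.norm_exp] at hg
    have : (-((κ + ε : ℝ) : ℂ) * a).re = -((κ + ε) * a) := by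
      rw [← Complex.ofReal_neg, ← Complex.ofReal_mul, Complex.ofReal_re]; ring
    rw [this, Real.exp_neg, ← div_eq_mul_inv, div_le_iff₀ (Real.exp_pos _)] at hg
    exact hg
  have ht : Tendsto (fun ε : ℝ => C * Real.exp ((κ + ε) * a)) (𝓝[>] 0)
      (𝓝 (C * Real.exp ((κ + 0) * a))) := by
    have : Continuous (fun ε : ℝ => C * Real.exp ((κ + ε) * a)) := by fun_prop
    exact (this.tendsto 0).mono_left nhdsWithin_le_nhds
  rw [add_zero] at ht
  exact ge_of_tendsto ht (by filter_upwards [self_mem_nhdsWithin] with ε hε using key ε hε)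

namespace HypData

variable {d n : ℕ} {p : (Fin d → ℂ) → ℂ} {e : Fin d → ℂ}

lemma norm_two_add_exp_le (m : ℝ) (hm : 0 ≤ m) (t : ℂ) :
    ‖2 + 1 * Complex.exp (m * t)‖ ≤ 3 * Real.exp (m * max t.re 0) := by
  have h1 : ‖2 + 1 * Complex.exp (m * t)‖ ≤ 2 + Real.exp (m * t.re) := by
    refine (norm_add_le _ _).trans ?_
    rw [one_mul, Complex.norm_exp]
    simp
  have h2 : Real.exp (m * t.re) ≤ Real.exp (m * max t.re 0) :=
    Real.exp_le_exp.2 (mul_le_mul_of_nonneg_left (le_max_left _ _) hm)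
  have h3 : 1 ≤ Real.exp (m * max t.re 0) :=
    Real.one_le_exp (mul_nonneg hm (le_max_right _ _))
  linarith

lemma prod_two_add_exp_le (m : ℝ) (hm : 0 ≤ m) (v : Fin n → ℂ) :
    ‖∏ j, (2 + 1 * Complex.exp (m * v j))‖ ≤ 3 ^ n * Real.exp (m * ∑ j, max (v j).re 0) := by
  rw [norm_prod]
  refine (Finset.prod_le_prod (fun _ _ => norm_nonneg _)
    (fun j _ => norm_two_add_exp_le m hm (v j))).trans ?_
  rw [Finset.prod_mul_distrib, ← Real.exp_sum, Finset.mul_sum]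
  simp

/-- The positive part of the roots. -/
lemma major (h : HypData d n p e) (x y : Fin d → ℝ) :
    ∑ j, max (h.rv (cx x + Complex.I • cx y) j).re 0 ≤ ∑ j, max (h.rv (cx x) j).re 0 := by
  set R := ∑ j, max (h.rv (cx x) j).re 0 with hR
  obtain ⟨B, hB0, hB⟩ := h.rbound
  have hrc : Continuous (fun z => ∑ j, max (h.rv z j).re 0) :=
    h.rcont (fun t => max t.re 0) (by fun_prop)
  have main : ∀ m : ℕ, ‖∏ j, (2 + 1 * Complex.exp (((m : ℝ) : ℂ) *
      h.rv (cx x + Complex.I • cx y) j))‖ ≤ 3 ^ n * Real.exp (m * R) := by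
    intro m
    have hm : (0 : ℝ) ≤ m := Nat.cast_nonneg m
    have := pl_real (fun ζ : ℂ => ∏ j, (2 + 1 * Complex.exp (((m : ℝ) : ℂ) *
      h.rv (Complex.I • cx y + ζ • cx x) j))) (h.prod_diff_exp _ _ 2 1 (m : ℝ))
      (3 ^ n * Real.exp (m * (n * (B * ‖Complex.I • cx y‖)))) (m * (n * (B * ‖cx x‖))) ?_
      (m * R) (3 ^ n) ?_ ?_ 1 zero_le_one
    · simpa [add_comm] using this
    · intro ζ
      refine (prod_two_add_exp_le m hm _).trans ?_
      rw [mul_assoc, ← Real.exp_add]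
      refine mul_le_mul_of_nonneg_left (Real.exp_le_exp.2 ?_) (by positivity)
      rw [mul_assoc, ← mul_add]
      refine mul_le_mul_of_nonneg_left ?_ hm
      have : ∀ j ∈ (Finset.univ : Finset (Fin n)),
          max (h.rv (Complex.I • cx y + ζ • cx x) j).re 0
          ≤ B * ‖Complex.I • cx y‖ + B * ‖cx x‖ * ‖ζ‖ := by
        intro j _
        refine max_le ?_ (by positivity)
        refine (Complex.re_le_norm _).trans ((hB _ _ (h.rv_spec _) j).trans ?_)
        rw [mul_assoc, ← mul_add]
        refine mul_le_mul_of_nonneg_left ((norm_add_le _ _).trans ?_) hB0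
        rw [norm_smul ζ, mul_comm ‖ζ‖]
      refine (Finset.sum_le_sum this).trans (le_of_eq ?_)
      simp; ring
    · intro ε hε
      refine ⟨3 ^ n, ?_⟩
      have hc : Continuous (fun η : ℝ => ∑ j, max (h.rv (cx x + (η : ℂ) • (Complex.I • cx y)) j).re 0) :=
        hrc.comp (by fun_prop)
      have hlim : Tendsto (fun a : ℝ => ∑ j, max (h.rv (cx x + ((a⁻¹ : ℝ) : ℂ) •
          (Complex.I • cx y)) j).re 0) atTop (𝓝 R) := by
        have h0 := (hc.tendsto 0).comp tendsto_inv_atTop_zero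
        have e0 : (∑ j, max (h.rv (cx x + ((0 : ℝ) : ℂ) • (Complex.I • cx y)) j).re 0) = R := by
          simp [hR]
        rw [e0] at h0
        exact h0
      have hm1 : (0 : ℝ) < m + 1 := by positivity
      filter_upwards [eventually_gt_atTop 0, hlim.eventually (gt_mem_nhds
        (show R < R + ε / (m + 1) by have : 0 < ε / (m + 1) := by positivity
                                     linarith))] with a ha hlt
      refine (prod_two_add_exp_le m hm _).trans ?_
      refine mul_le_mul_of_nonneg_left (Real.exp_le_exp.2 ?_) (by positivity)
      have hz : Complex.I • cx y + (a : ℂ) • cx x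
          = (a : ℂ) • (cx x + ((a⁻¹ : ℝ) : ℂ) • (Complex.I • cx y)) := by
        have ha' : (a : ℂ) ≠ 0 := by exact_mod_cast ha.ne'
        rw [smul_add, smul_smul (a : ℂ), Complex.ofReal_inv, mul_inv_cancel₀ ha', one_smul, add_comm]
      have hs : ∑ j, max (h.rv (Complex.I • cx y + (a : ℂ) • cx x) j).re 0
          = a * ∑ j, max (h.rv (cx x + ((a⁻¹ : ℝ) : ℂ) • (Complex.I • cx y)) j).re 0 := by
        rw [h.sum_eq (h.rv_spec _) (by rw [hz]; exact h.rsmul (h.rv_spec _) a)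
          (fun t => max t.re 0), Finset.mul_sum]
        apply Finset.sum_congr rfl
        intro j _
        rw [Complex.re_ofReal_mul, mul_max_of_nonneg _ _ ha.le, mul_zero]
      rw [hs]
      have h1 : (m : ℝ) * (a * ∑ j, max (h.rv (cx x + ((a⁻¹ : ℝ) : ℂ) • (Complex.I • cx y)) j).re 0)
          ≤ m * (a * (R + ε / (m + 1))) := by gcongr
      refine h1.trans ?_
      have h2 : (m : ℝ) * (ε / (m + 1)) ≤ ε := by
        rw [mul_div_assoc', div_le_iff₀ hm1]; nlinarith
      nlinarith
    · intro b
      have hz : Complex.I • cx y + ((b : ℂ) * Complex.I) • cx x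
          = Complex.I • cx (y + b • x) := by
        funext i; simp [cx]; ring
      simp only [hz]
      rw [h.prod_eq (h.rv_spec _) (h.rsmul (h.rv_spec _) Complex.I)
        (fun t => 2 + 1 * Complex.exp (((m : ℝ) : ℂ) * t))]
      refine (prod_two_add_exp_le m hm _).trans (le_of_eq ?_)
      have : ∑ j, max (Complex.I * h.rv (cx (y + b • x)) j).re 0 = 0 := by
        apply Finset.sum_eq_zero
        intro j _
        have := h.real _ _ (h.rv_spec (cx (y + b • x))) j
        simp [this]
      rw [this]; simp
  set v := h.rv (cx x + Complex.I • cx y) with hv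
  set S := ∑ j, max (v j).re 0 with hS
  have hlow : ∀ᶠ m : ℕ in atTop, (1 / 2 : ℝ) ^ n * Real.exp (m * S) ≤
      ‖∏ j, (2 + 1 * Complex.exp (((m : ℝ) : ℂ) * v j))‖ := by
    have : ∀ᶠ m : ℕ in atTop, ∀ j, (1 / 2 : ℝ) * Real.exp (m * max (v j).re 0) ≤
        ‖2 + 1 * Complex.exp (((m : ℝ) : ℂ) * v j)‖ := by
      rw [eventually_all]
      intro j
      have hn : ∀ m : ℕ, ‖Complex.exp (((m : ℝ) : ℂ) * v j)‖ = Real.exp (m * (v j).re) := by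
        intro m; rw [Complex.norm_exp, Complex.re_ofReal_mul]
      rcases le_or_gt (v j).re 0 with hle | hgt
      · refine Eventually.of_forall fun m => ?_
        rw [max_eq_right hle, mul_zero, Real.exp_zero, one_mul]
        have h1 := norm_sub_norm_le (2 : ℂ) (-Complex.exp (((m : ℝ) : ℂ) * v j))
        rw [sub_neg_eq_add, norm_neg, hn] at h1
        have h2 : Real.exp (m * (v j).re) ≤ 1 :=
          Real.exp_le_one_iff.2 (mul_nonpos_of_nonneg_of_nonpos (Nat.cast_nonneg m) hle)
        have h3 : ‖(2 : ℂ)‖ = 2 := by simp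
        linarith
      · have ht : Tendsto (fun m : ℕ => Real.exp (m * (v j).re)) atTop atTop :=
          Real.tendsto_exp_atTop.comp (tendsto_natCast_atTop_atTop.atTop_mul_const hgt)
        filter_upwards [ht.eventually_ge_atTop 4] with m hm4
        rw [max_eq_left hgt.le, one_mul]
        have h1 := norm_sub_norm_le (Complex.exp (((m : ℝ) : ℂ) * v j)) (-2)
        rw [sub_neg_eq_add, norm_neg, hn, add_comm] at h1
        have h3 : ‖(2 : ℂ)‖ = 2 := by simp
        linarith
    filter_upwards [this] with m hm
    rw [norm_prod]
    refine le_trans (le_of_eq ?_) (Finset.prod_le_prod (fun _ _ => by positivity) (fun j _ => hm j))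
    rw [Finset.prod_mul_distrib, ← Real.exp_sum, ← Finset.mul_sum, ← hS]
    simp
  by_contra hlt
  push Not at hlt
  have ht : Tendsto (fun m : ℕ => Real.exp (m * (S - R))) atTop atTop :=
    Real.tendsto_exp_atTop.comp (tendsto_natCast_atTop_atTop.atTop_mul_const (sub_pos.2 hlt))
  obtain ⟨m, hm1, hm2⟩ := (hlow.and (ht.eventually_gt_atTop (6 ^ n))).exists
  have h1 := hm1.trans (main m)
  have h2 : Real.exp (m * S) = Real.exp (m * (S - R)) * Real.exp (m * R) := by
    rw [← Real.exp_add]; congr 1; ring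
  rw [h2, ← mul_assoc] at h1
  have h3 := le_of_mul_le_mul_right h1 (Real.exp_pos _)
  have h4 : (6 : ℝ) ^ n = 3 ^ n * 2 ^ n := by rw [← mul_pow]; norm_num
  have h5 : ((1 / 2 : ℝ)) ^ n * 2 ^ n = 1 := by rw [← mul_pow]; norm_num
  have h6 : (0 : ℝ) < 2 ^ n := by positivity
  have h7 := mul_le_mul_of_nonneg_right h3 h6.le
  rw [mul_right_comm, h5, one_mul] at h7
  linarith

end HypData


lemma exp_int (M a : ℝ) (ha : |a| ≤ M) :
    ∫ τ in (-M)..M, Real.exp τ * max (a - τ) 0 = Real.exp a - Real.exp (-M) * (a + M + 1) := by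
  obtain ⟨h1, h2⟩ := abs_le.1 ha
  have hc : Continuous (fun τ : ℝ => Real.exp τ * max (a - τ) 0) := by fun_prop
  rw [← intervalIntegral.integral_add_adjacent_intervals (b := a) (hc.intervalIntegrable _ _)
    (hc.intervalIntegrable _ _)]
  have e1 : ∫ τ in (-M)..a, Real.exp τ * max (a - τ) 0
      = ∫ τ in (-M)..a, Real.exp τ * (a - τ) := by
    apply intervalIntegral.integral_congr
    intro τ hτ
    rw [Set.uIcc_of_le h1] at hτ
    simp only
    rw [max_eq_left (by linarith [hτ.2])]
  have e2 : ∫ τ in a..M, Real.exp τ * max (a - τ) 0 = ∫ τ in a..M, (0 : ℝ) := by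
    apply intervalIntegral.integral_congr
    intro τ hτ
    rw [Set.uIcc_of_le h2] at hτ
    simp only
    rw [max_eq_right (by linarith [hτ.1]), mul_zero]
  rw [e1, e2, intervalIntegral.integral_zero, add_zero]
  have hd : ∀ τ ∈ Set.uIcc (-M) a, HasDerivAt (fun τ : ℝ => Real.exp τ * (a - τ + 1))
      (Real.exp τ * (a - τ)) τ := by
    intro τ _
    have h3 : HasDerivAt (fun τ : ℝ => Real.exp τ * (a - τ + 1))
        (Real.exp τ * (a - τ + 1) + Real.exp τ * (-1)) τ := (Real.hasDerivAt_exp τ).mul (((hasDerivAt_id τ).const_sub a).add_const 1)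
    convert h3 using 1
    ring
  rw [intervalIntegral.integral_eq_sub_of_hasDerivAt hd
    (Continuous.intervalIntegrable (by fun_prop) _ _)]
  ring_nf

namespace HypData

variable {d n : ℕ} {p : (Fin d → ℂ) → ℂ} {e : Fin d → ℂ}

lemma e_eq (h : HypData d n p e) : e = cx (fun i => (e i).re) := by
  funext i
  exact (Complex.conj_eq_iff_re.1 (h.econj i)).symm

lemma major_sub (h : HypData d n p e) (x y : Fin d → ℝ) (τ : ℝ) :
    ∑ j, max ((h.rv (cx x + Complex.I • cx y) j).re - τ) 0
      ≤ ∑ j, max ((h.rv (cx x) j).re - τ) 0 := by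
  have h1 := h.major (x - τ • fun i => (e i).re) y
  have ex : cx (x - τ • fun i => (e i).re) = cx x - (τ : ℂ) • e := by
    conv_rhs => rw [h.e_eq]
    funext i; simp [cx]
  have ez : cx (x - τ • fun i => (e i).re) + Complex.I • cx y
      = (cx x + Complex.I • cx y) - (τ : ℂ) • e := by rw [ex]; abel
  rw [ez, ex] at h1
  rw [h.sum_eq (h.rv_spec _) (rsub (h.rv_spec _) _) (fun t => max t.re 0),
    h.sum_eq (h.rv_spec (cx x - (τ : ℂ) • e)) (rsub (h.rv_spec _) _) (fun t => max t.re 0)] at h1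
  simpa using h1

lemma exp_re_le (h : HypData d n p e) (x y : Fin d → ℝ) :
    ∑ j, Real.exp (h.rv (cx x + Complex.I • cx y) j).re ≤ ∑ j, Real.exp (h.rv (cx x) j).re := by
  obtain ⟨B, hB0, hB⟩ := h.rbound
  set a := fun j => (h.rv (cx x + Complex.I • cx y) j).re with ha
  set b := fun j => (h.rv (cx x) j).re with hb
  set M := B * ‖cx x + Complex.I • cx y‖ + B * ‖cx x‖ with hM
  have haM : ∀ j, |a j| ≤ M := by
    intro j
    have := (Complex.abs_re_le_norm _).trans (hB _ _ (h.rv_spec (cx x + Complex.I • cx y)) j)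
    have h2 : 0 ≤ B * ‖cx x‖ := by positivity
    simp only [ha]; linarith
  have hbM : ∀ j, |b j| ≤ M := by
    intro j
    have := (Complex.abs_re_le_norm _).trans (hB _ _ (h.rv_spec (cx x)) j)
    have h2 : 0 ≤ B * ‖cx x + Complex.I • cx y‖ := by positivity
    simp only [hb]; linarith
  have hmaj : ∀ τ, ∑ j, max (a j - τ) 0 ≤ ∑ j, max (b j - τ) 0 := h.major_sub x y
  have hM0 : -M ≤ M := by
    have : 0 ≤ M := by positivity
    linarith
  have form : ∀ c : Fin n → ℝ, (∀ j, |c j| ≤ M) → ∑ j, Real.exp (c j)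
      = (∫ τ in (-M)..M, Real.exp τ * ∑ j, max (c j - τ) 0)
        + Real.exp (-M) * (∑ j, max (c j - (-M)) 0) + n * Real.exp (-M) := by
    intro c hc
    have e1 : ∫ τ in (-M)..M, Real.exp τ * ∑ j, max (c j - τ) 0
        = ∑ j, ∫ τ in (-M)..M, Real.exp τ * max (c j - τ) 0 := by
      simp_rw [Finset.mul_sum]
      rw [intervalIntegral.integral_finsetSum]
      intro j _
      exact Continuous.intervalIntegrable (by fun_prop) _ _
    rw [e1, Finset.mul_sum, ← Finset.sum_add_distrib]
    have e2 : (n : ℝ) * Real.exp (-M) = ∑ j : Fin n, Real.exp (-M) := by simp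
    rw [e2, ← Finset.sum_add_distrib]
    apply Finset.sum_congr rfl
    intro j _
    rw [exp_int M (c j) (hc j), max_eq_left (by linarith [(abs_le.1 (hc j)).1])]
    ring
  change ∑ j, Real.exp (a j) ≤ ∑ j, Real.exp (b j)
  rw [form a haM, form b hbM]
  gcongr ?_ + ?_ + _
  · apply intervalIntegral.integral_mono_on hM0
    · exact Continuous.intervalIntegrable (by fun_prop) _ _
    · exact Continuous.intervalIntegrable (by fun_prop) _ _
    · intro τ _
      exact mul_le_mul_of_nonneg_left (hmaj τ) (Real.exp_pos _).le
  · exact mul_le_mul_of_nonneg_left (hmaj (-M)) (Real.exp_pos _).le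

/-- Complex trace exponential. -/
noncomputable def Gc (h : HypData d n p e) (z : Fin d → ℂ) : ℂ := ∑ j, Complex.exp (h.rv z j)

/-- Real trace exponential. -/
noncomputable def Gr (h : HypData d n p e) (x : Fin d → ℝ) : ℝ := ∑ j, Real.exp (h.rv (cx x) j).re

lemma Gc_cx (h : HypData d n p e) (x : Fin d → ℝ) : h.Gc (cx x) = (h.Gr x : ℂ) := by
  unfold Gc Gr
  rw [Complex.ofReal_sum]
  apply Finset.sum_congr rfl
  intro j _
  rw [Complex.ofReal_exp]
  congr 1
  apply Complex.ext
  · simp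
  · simpa using h.real _ _ (h.rv_spec _) j

lemma Gc_le (h : HypData d n p e) (x y : Fin d → ℝ) :
    ‖h.Gc (cx x + Complex.I • cx y)‖ ≤ h.Gr x := by
  refine (norm_sum_le _ _).trans ?_
  simp_rw [Complex.norm_exp]
  exact h.exp_re_le x y

lemma Gr_pos (h : HypData d n p e) (hn : 0 < n) (x : Fin d → ℝ) : 0 < h.Gr x := by
  have : Nonempty (Fin n) := ⟨⟨0, hn⟩⟩
  exact Finset.sum_pos (fun _ _ => Real.exp_pos _) Finset.univ_nonempty

lemma cx_cont : Continuous (cx : (Fin d → ℝ) → Fin d → ℂ) := by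
  unfold cx; fun_prop

lemma Gr_cont (h : HypData d n p e) : Continuous h.Gr := by
  have := h.rcont (fun t => Real.exp t.re) (by fun_prop)
  exact this.comp cx_cont

lemma Gc_conj (h : HypData d n p e) (z : Fin d → ℂ) :
    h.Gc (fun i => star (z i)) = star (h.Gc z) := by
  unfold Gc
  rw [h.sum_eq (h.rv_spec _) (h.rconj (h.rv_spec z)) Complex.exp, star_sum]
  apply Finset.sum_congr rfl
  intro j _
  exact Complex.exp_conj _

lemma Gc_norm_le (h : HypData d n p e) : ∃ B : ℝ, 0 ≤ B ∧ ∀ z, ‖h.Gc z‖ ≤ n * Real.exp (B * ‖z‖) := by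
  obtain ⟨B, hB0, hB⟩ := h.rbound
  refine ⟨B, hB0, fun z => (norm_sum_le _ _).trans ?_⟩
  refine (Finset.sum_le_sum (g := fun _ => Real.exp (B * ‖z‖)) fun j _ => ?_).trans (by simp)
  rw [Complex.norm_exp]
  exact Real.exp_le_exp.2 ((Complex.re_le_norm _).trans (hB _ _ (h.rv_spec z) j))

lemma Gr_logconvex (h : HypData d n p e) (x y : Fin d → ℝ) (s : ℝ)
    (hs0 : 0 ≤ s) (hs1 : s ≤ 1) :
    h.Gr (x + s • (y - x)) ≤ h.Gr x ^ (1 - s) * h.Gr y ^ s := by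
  have hz : ∀ ζ : ℂ, cx x + ζ • cx (y - x)
      = cx (x + ζ.re • (y - x)) + Complex.I • cx (ζ.im • (y - x)) := by
    intro ζ
    funext i
    simp only [cx, Pi.add_apply, Pi.smul_apply, Pi.sub_apply, smul_eq_mul]
    push_cast
    conv_lhs => rw [← Complex.re_add_im ζ]
    ring
  have hb : ∀ ζ : ℂ, ‖h.Gc (cx x + ζ • cx (y - x))‖ ≤ h.Gr (x + ζ.re • (y - x)) := by
    intro ζ; rw [hz]; exact h.Gc_le _ _
  have key := Complex.HadamardThreeLines.norm_le_interp_of_mem_verticalClosedStrip₀₁'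
    (fun ζ : ℂ => h.Gc (cx x + ζ • cx (y - x))) (z := (s : ℂ)) (a := h.Gr x) (b := h.Gr y)
    ?_ ?_ ?_ ?_ ?_
  · have e1 : cx x + (s : ℂ) • cx (y - x) = cx (x + s • (y - x)) := by
      funext i; simp [cx]
    simp only [e1, h.Gc_cx, Complex.ofReal_re, Complex.norm_real] at key
    exact (le_abs_self _).trans key
  · simpa [Complex.HadamardThreeLines.verticalClosedStrip] using ⟨hs0, hs1⟩
  · exact (h.sum_diff_exp _ _).diffContOnCl
  · have hc : Continuous (fun s : ℝ => h.Gr (x + s • (y - x))) := h.Gr_cont.comp (by fun_prop)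
    obtain ⟨C, hC⟩ := (isCompact_Icc (a := (0 : ℝ)) (b := 1)).exists_bound_of_continuousOn
      hc.continuousOn
    refine ⟨C, ?_⟩
    rintro _ ⟨ζ, hζ, rfl⟩
    have hζ' : ζ.re ∈ Set.Icc (0 : ℝ) 1 := hζ
    exact (hb ζ).trans ((le_abs_self _).trans (hC _ hζ'))
  · intro ζ hζ
    have : ζ.re = 0 := hζ
    have h1 := hb ζ
    simpa [this] using h1
  · intro ζ hζ
    have : ζ.re = 1 := hζ
    have h1 := hb ζ
    simpa [this] using h1

lemma log_convex (h : HypData d n p e) (hn : 0 < n) :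
    ConvexOn ℝ Set.univ (fun x => Real.log (h.Gr x)) := by
  refine ⟨convex_univ, fun x _ y _ a b ha hb hab => ?_⟩
  have e1 : a • x + b • y = x + b • (y - x) := by
    rw [← eq_sub_iff_add_eq] at hab; rw [hab, sub_smul, one_smul, smul_sub]; abel
  have h1 := h.Gr_logconvex x y b hb (by linarith)
  have h2 := Real.log_le_log (h.Gr_pos hn _) h1
  rw [Real.log_mul (Real.rpow_pos_of_pos (h.Gr_pos hn _) _).ne'
    (Real.rpow_pos_of_pos (h.Gr_pos hn _) _).ne', Real.log_rpow (h.Gr_pos hn _),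
    Real.log_rpow (h.Gr_pos hn _)] at h2
  simp only [e1, smul_eq_mul]
  have : a = 1 - b := by linarith
  rw [this]; exact h2

end HypData


lemma poly_bound (q : Polynomial ℂ) : ∃ K : ℝ, 0 ≤ K ∧ ∀ (w : ℂ) (r : ℝ), 1 ≤ r → ‖w‖ ≤ r →
    ‖q.eval w‖ ≤ K * r ^ q.natDegree := by
  refine ⟨∑ i ∈ Finset.range (q.natDegree + 1), ‖q.coeff i‖,
    Finset.sum_nonneg fun _ _ => norm_nonneg _, fun w r hr hw => ?_⟩
  rw [Polynomial.eval_eq_sum_range, Finset.sum_mul]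
  refine (norm_sum_le _ _).trans (Finset.sum_le_sum fun i hi => ?_)
  rw [norm_mul, norm_pow]
  refine mul_le_mul_of_nonneg_left ?_ (norm_nonneg _)
  refine (pow_le_pow_left₀ (norm_nonneg _) hw i).trans ?_
  exact pow_le_pow_right₀ hr (by rw [Finset.mem_range] at hi; omega)

/-- Chebyshev comparison for entire functions bounded on the imaginary axis. -/
lemma cheb_bound (f : ℂ → ℂ) (hf : Differentiable ℂ f) (A B : ℝ) (hA : 1 ≤ A) (hB : 0 ≤ B)
    (hexp : ∀ z, ‖f z‖ ≤ A * Real.exp (B * ‖z‖)) (σ : ℝ) (hσ : 0 ≤ σ)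
    (hre : ∀ ε > 0, ∃ A' : ℝ, 1 ≤ A' ∧ ∀ᶠ a : ℝ in atTop, ‖f a‖ ≤ A' * Real.exp ((σ + ε) * a))
    (him : ∀ y : ℝ, ∃ c : ℝ, |c| ≤ 1 ∧ f (y * Complex.I) = c) (c : ℝ) (hc : f 1 = c) :
    c ≤ Real.cosh σ := by
  rcases le_or_gt c 1 with h1 | h1
  · exact h1.trans (Real.one_le_cosh σ)
  set θ := Real.arcosh c with hθ
  have hcθ : Real.cosh θ = c := Real.cosh_arcosh h1.le
  have hθ0 : 0 ≤ θ := Real.arcosh_nonneg h1.le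
  have main : ∀ m : ℕ, Real.cosh (m * θ) ≤ Real.exp (m * σ) := by
    intro m
    set T := Polynomial.Chebyshev.T ℂ (m : ℤ) with hT
    have hdeg : T.natDegree = m := by
      rw [hT, Polynomial.Chebyshev.natDegree_T]; simp
    obtain ⟨K, hK0, hK⟩ := poly_bound T
    rw [hdeg] at hK
    have := pl_real (fun z => T.eval (f z)) (T.differentiable.comp hf) (K * A ^ m) (m * B) ?_
      (m * σ) 1 ?_ ?_ 1 zero_le_one
    · simp only [Complex.ofReal_one, hc] at this
      rw [hT, ← Polynomial.Chebyshev.complex_ofReal_eval_T, ← hcθ,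
        Polynomial.Chebyshev.T_real_cosh, Complex.norm_real] at this
      have h2 := (le_abs_self _).trans this
      simpa using h2
    · intro z
      have h2 : 1 ≤ A * Real.exp (B * ‖z‖) :=
        one_le_mul_of_one_le_of_one_le hA (Real.one_le_exp (by positivity))
      refine (hK _ _ h2 (hexp z)).trans (le_of_eq ?_)
      rw [mul_pow, ← Real.exp_nat_mul]; ring_nf
    · intro ε hε
      have hm1 : (0 : ℝ) < m + 1 := by positivity
      obtain ⟨A', hA', hev⟩ := hre (ε / (m + 1)) (by positivity)
      refine ⟨K * A' ^ m, ?_⟩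
      filter_upwards [hev, eventually_ge_atTop 0] with a ha ha0
      have h2 : 1 ≤ A' * Real.exp ((σ + ε / (m + 1)) * a) :=
        one_le_mul_of_one_le_of_one_le hA' (Real.one_le_exp (by positivity))
      refine (hK _ _ h2 ha).trans ?_
      rw [mul_pow, ← Real.exp_nat_mul, ← mul_assoc]
      refine mul_le_mul_of_nonneg_left (Real.exp_le_exp.2 ?_) (by positivity)
      rw [← mul_assoc]
      refine mul_le_mul_of_nonneg_right ?_ ha0
      have h3 : (m : ℝ) * (ε / (m + 1)) ≤ ε := by
        rw [mul_div_assoc', div_le_iff₀ hm1]; nlinarith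
      linarith
    · intro y
      obtain ⟨b, hb, hfb⟩ := him y
      simp only [hfb]
      rw [hT, ← Polynomial.Chebyshev.complex_ofReal_eval_T, Complex.norm_real]
      exact Polynomial.Chebyshev.abs_eval_T_real_le_one _ hb
  have hle : θ ≤ σ := by
    by_contra hlt
    push Not at hlt
    have ht : Tendsto (fun m : ℕ => Real.exp (m * (θ - σ))) atTop atTop :=
      Real.tendsto_exp_atTop.comp (tendsto_natCast_atTop_atTop.atTop_mul_const (sub_pos.2 hlt))
    obtain ⟨m, hm⟩ := (ht.eventually_gt_atTop 2).exists
    have h2 := main m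
    rw [Real.cosh_eq] at h2
    have h3 : Real.exp (m * θ) = Real.exp (m * (θ - σ)) * Real.exp (m * σ) := by
      rw [← Real.exp_add]; congr 1; ring
    have h4 := Real.exp_pos (-(m * θ))
    have h5 := Real.exp_pos (m * σ)
    nlinarith
  rw [← hcθ, Real.cosh_le_cosh, abs_of_nonneg hθ0, abs_of_nonneg hσ]
  exact hle

namespace HypData

variable {d n : ℕ} {p : (Fin d → ℂ) → ℂ} {e : Fin d → ℂ}

lemma cx_add (x y : Fin d → ℝ) : cx (x + y) = cx x + cx y := by funext i; simp [cx]
lemma cx_smul (a : ℝ) (x : Fin d → ℝ) : cx (a • x) = (a : ℂ) • cx x := by funext i; simp [cx]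

lemma Gr_growth (h : HypData d n p e) (x w : Fin d → ℝ) (σ : ℝ)
    (hw : ∑ j, max ((h.rv (cx w) j).re - σ) 0 = 0) (ε : ℝ) (hε : 0 < ε) :
    ∀ᶠ a : ℝ in atTop, h.Gr (x + a • w) ≤ n * Real.exp ((σ + ε) * a) := by
  have hc : Continuous (fun η : ℝ => ∑ j, max ((h.rv (cx (w + η • x)) j).re - σ) 0) :=
    (h.rcont (fun t => max (t.re - σ) 0) (by fun_prop)).comp (cx_cont.comp (by fun_prop))
  have h0 := (hc.tendsto 0).comp tendsto_inv_atTop_zero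
  have e0 : ∑ j, max ((h.rv (cx (w + (0 : ℝ) • x)) j).re - σ) 0 = 0 := by simpa using hw
  rw [e0] at h0
  filter_upwards [h0.eventually (gt_mem_nhds hε), eventually_gt_atTop 0] with a ha ha0
  simp only [Function.comp] at ha
  have e1 : cx (x + a • w) = (a : ℂ) • cx (w + a⁻¹ • x) := by
    rw [← cx_smul, smul_add, smul_smul, mul_inv_cancel₀ ha0.ne', one_smul, add_comm]
  have e2 : h.Gr (x + a • w) = ∑ j, Real.exp (a * (h.rv (cx (w + a⁻¹ • x)) j).re) := by
    unfold Gr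
    rw [h.sum_eq (h.rv_spec _) (by rw [e1]; exact h.rsmul (h.rv_spec _) a)
      (fun t => Real.exp t.re)]
    simp
  rw [e2]
  refine (Finset.sum_le_sum (g := fun _ => Real.exp ((σ + ε) * a)) fun j _ => ?_).trans (by simp)
  apply Real.exp_le_exp.2
  rw [mul_comm]
  refine mul_le_mul_of_nonneg_right ?_ ha0.le
  have h1 := Finset.single_le_sum (f := fun j => max ((h.rv (cx (w + a⁻¹ • x)) j).re - σ) 0)
    (fun i _ => le_max_right _ _) (Finset.mem_univ j)
  have h2 := le_max_left ((h.rv (cx (w + a⁻¹ • x)) j).re - σ) 0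
  linarith

lemma Gr_mid (h : HypData d n p e) (hn : 0 < n) (x w : Fin d → ℝ) (σ : ℝ) (hσ : 0 ≤ σ)
    (hw : ∀ j, |(h.rv (cx w) j).re| ≤ σ) :
    h.Gr (x + w) + h.Gr (x - w) ≤ 2 * Real.cosh σ * h.Gr x := by
  have hw1 : ∑ j, max ((h.rv (cx w) j).re - σ) 0 = 0 := by
    apply Finset.sum_eq_zero
    intro j _
    exact max_eq_right (by linarith [(abs_le.1 (hw j)).2])
  have hw2 : ∑ j, max ((h.rv (cx (-w)) j).re - σ) 0 = 0 := by
    have e1 : cx (-w) = (-1 : ℂ) • cx w := by funext i; simp [cx]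
    rw [h.sum_eq (h.rv_spec _) (by rw [e1]; exact h.rsmul (h.rv_spec _) (-1))
      (fun t => max (t.re - σ) 0)]
    apply Finset.sum_eq_zero
    intro j _
    refine max_eq_right ?_
    have := (abs_le.1 (hw j)).1
    simp only [neg_mul, one_mul, Complex.neg_re]
    linarith
  have hG := h.Gr_pos hn x
  have hGc : (2 * (h.Gr x : ℂ)) ≠ 0 := by
    exact_mod_cast (mul_pos two_pos hG).ne'
  obtain ⟨B, hB0, hB⟩ := h.Gc_norm_le
  have hnorm : ‖(2 * (h.Gr x : ℂ))‖ = 2 * h.Gr x := by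
    rw [norm_mul, Complex.norm_real, Real.norm_eq_abs, abs_of_pos hG]; simp
  have hreal : ∀ a : ℝ, (h.Gc (cx x + (a : ℂ) • cx w) + h.Gc (cx x + (a : ℂ) • cx (-w)))
        / (2 * (h.Gr x : ℂ))
      = (((h.Gr (x + a • w) + h.Gr (x + a • (-w))) / (2 * h.Gr x) : ℝ) : ℂ) := by
    intro a
    rw [← cx_smul, ← cx_smul, ← cx_add, ← cx_add, h.Gc_cx, h.Gc_cx]
    push_cast; rfl
  have key := cheb_bound (fun ζ : ℂ => (h.Gc (cx x + ζ • cx w) + h.Gc (cx x + ζ • cx (-w)))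
      / (2 * (h.Gr x : ℂ))) ?_ (1 + n * Real.exp (B * ‖cx x‖) / h.Gr x) (B * ‖cx w‖) ?_ ?_ ?_
      σ hσ ?_ ?_ ((h.Gr (x + w) + h.Gr (x - w)) / (2 * h.Gr x)) ?_
  · rw [div_le_iff₀ (by positivity)] at key
    linarith
  · exact ((h.sum_diff_exp _ _).add (h.sum_diff_exp _ _)).div_const _
  · have : 0 ≤ n * Real.exp (B * ‖cx x‖) / h.Gr x := by positivity
    linarith
  · positivity
  · intro ζ
    have hnw : ‖cx (-w)‖ = ‖cx w‖ := by
      have e1 : cx (-w) = - cx w := by funext i; simp [cx]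
      rw [e1, norm_neg]
    have hone : ∀ u : Fin d → ℝ, ‖cx u‖ = ‖cx w‖ →
        ‖h.Gc (cx x + ζ • cx u)‖ ≤ n * Real.exp (B * ‖cx x‖) * Real.exp (B * ‖cx w‖ * ‖ζ‖) := by
      intro u hu
      refine (hB _).trans ?_
      rw [mul_assoc, ← Real.exp_add]
      refine mul_le_mul_of_nonneg_left (Real.exp_le_exp.2 ?_) (by positivity)
      rw [mul_assoc, ← mul_add]
      refine mul_le_mul_of_nonneg_left ((norm_add_le _ _).trans ?_) hB0
      rw [norm_smul, hu, mul_comm ‖ζ‖]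
    rw [norm_div, hnorm, div_le_iff₀ (by positivity)]
    refine (norm_add_le _ _).trans ((add_le_add (hone w rfl) (hone (-w) hnw)).trans ?_)
    have e3 : (1 + n * Real.exp (B * ‖cx x‖) / h.Gr x) * Real.exp (B * ‖cx w‖ * ‖ζ‖) * (2 * h.Gr x)
      = 2 * h.Gr x * Real.exp (B * ‖cx w‖ * ‖ζ‖) + 2 * (n * Real.exp (B * ‖cx x‖) *
        Real.exp (B * ‖cx w‖ * ‖ζ‖)) := by field_simp
    rw [e3]
    have : 0 ≤ 2 * h.Gr x * Real.exp (B * ‖cx w‖ * ‖ζ‖) := by positivity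
    linarith
  · intro ε hε
    refine ⟨1 + n / h.Gr x, ?_, ?_⟩
    · have : 0 ≤ n / h.Gr x := by positivity
      linarith
    filter_upwards [h.Gr_growth x w σ hw1 ε hε, h.Gr_growth x (-w) σ hw2 ε hε] with a h1 h2
    rw [hreal, Complex.norm_real, Real.norm_eq_abs, abs_of_nonneg (by
      have := h.Gr_pos hn (x + a • w); have := h.Gr_pos hn (x + a • (-w)); positivity),
      div_le_iff₀ (by positivity)]
    have e3 : (1 + n / h.Gr x) * Real.exp ((σ + ε) * a) * (2 * h.Gr x)
      = 2 * h.Gr x * Real.exp ((σ + ε) * a) + 2 * (n * Real.exp ((σ + ε) * a)) := by field_simp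
    rw [e3]
    have : 0 ≤ 2 * h.Gr x * Real.exp ((σ + ε) * a) := by positivity
    linarith
  · intro y
    have e1 : cx x + ((y : ℂ) * Complex.I) • cx w = cx x + Complex.I • cx (y • w) := by
      funext i; simp [cx]; ring
    have e2 : cx x + ((y : ℂ) * Complex.I) • cx (-w)
        = fun i => star ((cx x + Complex.I • cx (y • w)) i) := by
      funext i; simp [cx]; ring
    refine ⟨(h.Gc (cx x + Complex.I • cx (y • w))).re / h.Gr x, ?_, ?_⟩
    · rw [abs_div, abs_of_pos hG, div_le_one hG]
      exact (Complex.abs_re_le_norm _).trans (h.Gc_le _ _)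
    · rw [e2, h.Gc_conj, e1]
      have := Complex.add_conj (h.Gc (cx x + Complex.I • cx (y • w)))
      rw [show star (h.Gc (cx x + Complex.I • cx (y • w)))
        = (starRingEnd ℂ) (h.Gc (cx x + Complex.I • cx (y • w))) from rfl, this]
      push_cast
      rw [mul_div_mul_left _ _ two_ne_zero]
  · have := hreal 1
    simp only [Complex.ofReal_one] at this
    rw [this]
    simp only [one_smul, sub_eq_add_neg]

lemma log_mid (h : HypData d n p e) (hn : 0 < n) (x w : Fin d → ℝ) (σ : ℝ) (hσ : 0 ≤ σ)
    (hw : ∀ j, |(h.rv (cx w) j).re| ≤ σ) :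
    Real.log (h.Gr (x + w)) + Real.log (h.Gr (x - w)) - 2 * Real.log (h.Gr x) ≤ σ ^ 2 := by
  have h1 := h.Gr_mid hn x w σ hσ hw
  have a := h.Gr_pos hn (x + w)
  have b := h.Gr_pos hn (x - w)
  have c := h.Gr_pos hn x
  have h2 := Real.cosh_le_exp_half_sq σ
  have h3 : h.Gr (x + w) * h.Gr (x - w) ≤ (Real.exp (σ ^ 2 / 2) * h.Gr x) ^ 2 := by
    have h4 : h.Gr (x + w) + h.Gr (x - w) ≤ 2 * (Real.exp (σ ^ 2 / 2) * h.Gr x) := by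
      have := mul_le_mul_of_nonneg_right h2 c.le
      linarith
    nlinarith [sq_nonneg (h.Gr (x + w) - h.Gr (x - w))]
  have h4 := Real.log_le_log (by positivity) h3
  rw [Real.log_mul a.ne' b.ne', Real.log_pow, Real.log_mul (Real.exp_pos _).ne' c.ne',
    Real.log_exp] at h4
  push_cast at h4
  linarith

end HypData


section AbstractPart

variable {V : Type*} [NormedAddCommGroup V] [InnerProductSpace ℝ V] [CompleteSpace V]

lemma exists_subgrad (f : V → ℝ) (hf : ConvexOn ℝ Set.univ f) (hc : Continuous f) (x : V) :
    ∃ g : V, ∀ z, f x + ⟪g, z - x⟫ ≤ f z := by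
  have hconv := hf.convex_strict_epigraph
  have hopen : IsOpen {q : V × ℝ | q.1 ∈ Set.univ ∧ f q.1 < q.2} := by
    simp only [Set.mem_univ, true_and]
    exact isOpen_lt (hc.comp continuous_fst) continuous_snd
  obtain ⟨φ, hφ⟩ := geometric_hahn_banach_open_point hconv hopen
    (x := (x, f x)) (by simp)
  have hsplit : ∀ (w : V) (s : ℝ), φ (w, s) = φ (w, 0) + s * φ (0, 1) := by
    intro w s
    have : (w, s) = (w, (0 : ℝ)) + s • ((0 : V), (1 : ℝ)) := by ext <;> simp
    rw [this, map_add, map_smul, smul_eq_mul]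
  set k := - φ (0, 1) with hk
  have hk0 : 0 < k := by
    have := hφ (x, f x + 1) ⟨trivial, by simp⟩
    rw [hsplit x (f x + 1), hsplit x (f x)] at this
    linarith
  let ψ : V →L[ℝ] ℝ := k⁻¹ • (φ.comp (ContinuousLinearMap.inl ℝ V ℝ))
  refine ⟨(InnerProductSpace.toDual ℝ V).symm ψ, fun z => ?_⟩
  rw [InnerProductSpace.toDual_symm_apply]
  have e1 : ψ (z - x) = k⁻¹ * (φ (z, 0) - φ (x, 0)) := by
    rw [map_sub]
    simp [ψ, mul_sub]
  rw [e1]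
  refine le_of_forall_pos_le_add fun ε hε => ?_
  have h1 := hφ (z, f z + ε) ⟨trivial, by simpa using hε⟩
  rw [hsplit z (f z + ε), hsplit x (f x)] at h1
  have h2 : k⁻¹ * (φ (z, 0) - φ (x, 0)) ≤ f z + ε - f x := by
    rw [inv_mul_le_iff₀ hk0]
    nlinarith
  linarith

lemma grad_bounds (f : V → ℝ) (hf : ConvexOn ℝ Set.univ f) (hcont : Continuous f) (Bd : V → ℝ → Prop)
  (C : ℝ) (hC : ∀ w, Bd w (C * ‖w‖)) (L : ℝ)
  (hmid : ∀ x w ν, Bd w ν → f (x + w) + f (x - w) - 2 * f x ≤ L * ν ^ 2)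
    (x : V) : ∀ w, f x + ⟪gradient f x, w⟫ ≤ f (x + w) ∧
    ∀ ν, Bd w ν → f (x + w) - f x - ⟪gradient f x, w⟫ ≤ L * ν ^ 2 := by
  obtain ⟨g, hg⟩ := exists_subgrad f hf hcont x
  have lower : ∀ w, f x + ⟪g, w⟫ ≤ f (x + w) := by
    intro w; simpa using hg (x + w)
  have upper : ∀ w ν, Bd w ν → f (x + w) - f x - ⟪g, w⟫ ≤ L * ν ^ 2 := by
    intro w ν hw
    have h1 := lower (-w)
    rw [inner_neg_right, ← sub_eq_add_neg x w] at h1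
    have h2 := hmid x w ν hw
    linarith
  have hgrad : HasGradientAt f g x := by
    rw [hasGradientAt_iff_isLittleO]
    have hO : (fun x' => f x' - f x - ⟪g, x' - x⟫) =O[𝓝 x] (fun x' => ‖x' - x‖ ^ 2) := by
      refine Asymptotics.IsBigO.of_bound (L * C ^ 2) (Eventually.of_forall fun x' => ?_)
      have h1 := lower (x' - x)
      have h2 := upper (x' - x) _ (hC _)
      rw [add_sub_cancel] at h1 h2
      rw [Real.norm_eq_abs, Real.norm_eq_abs, abs_of_nonneg (by linarith),
        abs_of_nonneg (by positivity)]
      rw [mul_pow] at h2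
      linarith
    refine hO.trans_isLittleO ?_
    have h3 : (fun w : V => ‖w‖ ^ 2) =o[𝓝 0] (fun w : V => w) := by
      have := Asymptotics.isLittleO_norm_pow_id (E' := V) (n := 2) (by norm_num)
      simpa using this
    have h4 : Tendsto (fun x' => x' - x) (𝓝 x) (𝓝 0) := by
      have : Continuous (fun x' : V => x' - x) := by fun_prop
      simpa using this.tendsto x
    exact h3.comp_tendsto h4
  rw [hgrad.gradient]
  exact fun w => ⟨lower w, fun ν => upper w ν⟩

lemma grad_half (f : V → ℝ) (hf : ConvexOn ℝ Set.univ f) (hcont : Continuous f) (Bd : V → ℝ → Prop)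
  (hsm : ∀ w ν t, 0 ≤ t → Bd w ν → Bd (t • w) (t * ν))
  (C : ℝ) (hC : ∀ w, Bd w (C * ‖w‖)) (L : ℝ)
  (hmid : ∀ x w ν, Bd w ν → f (x + w) + f (x - w) - 2 * f x ≤ L * ν ^ 2)
    (x w : V) (ν : ℝ) (hw : Bd w ν) :
    f (x + w) - f x - ⟪gradient f x, w⟫ ≤ L * ν ^ 2 / 2 := by
  have key : ∀ m : ℕ, ∀ w ν, Bd w ν →
      f (x + w) - f x - ⟪gradient f x, w⟫ ≤ (1 / 2 + (1 / 2) ^ (m + 1)) * (L * ν ^ 2) := by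
    intro m
    induction m with
    | zero =>
      intro w ν hw
      have := (grad_bounds f hf hcont Bd C hC L hmid x w).2 ν hw
      have e0 : (1 / 2 + (1 / 2 : ℝ) ^ (0 + 1)) = 1 := by norm_num
      rw [e0, one_mul]
      exact this
    | succ m ih =>
      intro w ν hw
      have hw2 := hsm w ν (1 / 2) (by norm_num) hw
      have h1 := ih _ _ hw2
      have h2 := hmid (x + (1 / 2 : ℝ) • w) _ _ hw2
      have e1 : x + (1 / 2 : ℝ) • w + (1 / 2 : ℝ) • w = x + w := by
        rw [add_assoc, ← add_smul]; norm_num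
      rw [e1, add_sub_cancel_right] at h2
      rw [inner_smul_right] at h1
      rw [pow_succ]
      nlinarith
  have ht : Tendsto (fun m : ℕ => (1 / 2 + (1 / 2 : ℝ) ^ (m + 1)) * (L * ν ^ 2)) atTop
      (𝓝 ((1 / 2 + 0) * (L * ν ^ 2))) := by
    refine Tendsto.mul_const _ (Tendsto.const_add _ ?_)
    exact (tendsto_pow_atTop_nhds_zero_of_lt_one (by norm_num) (by norm_num)).comp
      (tendsto_add_atTop_nat 1)
  have := ge_of_tendsto' ht (fun m => key m w ν hw)
  linarith

lemma grad_lip (f : V → ℝ) (hf : ConvexOn ℝ Set.univ f) (hcont : Continuous f) (Bd : V → ℝ → Prop)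
  (hsm : ∀ w ν t, 0 ≤ t → Bd w ν → Bd (t • w) (t * ν)) (hneg : ∀ w ν, Bd w ν → Bd (-w) ν)
  (C : ℝ) (hC : ∀ w, Bd w (C * ‖w‖)) (L : ℝ)
  (hmid : ∀ x w ν, Bd w ν → f (x + w) + f (x - w) - 2 * f x ≤ L * ν ^ 2)
    (x y v : V) (r : ℝ) (hr0 : 0 ≤ r) (hr : Bd (x - y) r) (hv : Bd v 1) :
    ⟪gradient f x - gradient f y, v⟫ ≤ L * r := by
  have key : ∀ s : ℝ, 0 ≤ s → s * ⟪gradient f x - gradient f y, v⟫ - L * s ^ 2 / 2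
      ≤ L * r ^ 2 / 2 := by
    intro s hs
    have h1 := grad_half f hf hcont Bd hsm C hC L hmid x (s • (-v)) _ (hsm _ _ s hs (hneg _ _ hv))
    have h2 := (grad_bounds f hf hcont Bd C hC L hmid y (x + s • (-v) - y)).1
    have h3 := grad_half f hf hcont Bd hsm C hC L hmid y (x - y) r hr
    rw [add_sub_cancel] at h2 h3
    rw [add_sub_right_comm, inner_add_right, inner_smul_right, inner_neg_right] at h2
    rw [inner_smul_right, inner_neg_right] at h1
    rw [inner_sub_left]
    nlinarith
  rcases hr0.eq_or_lt with h0 | h0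
  · subst h0
    by_contra hlt
    push Not at hlt
    set G := ⟪gradient f x - gradient f y, v⟫
    rw [mul_zero] at hlt
    have h1 := key (G / (|L| + 1)) (by positivity)
    have hL := le_abs_self L
    set s := G / (|L| + 1) with hs
    have hs0 : 0 < s := by positivity
    have e1 : G = s * (|L| + 1) := by rw [hs]; field_simp
    rw [e1] at h1
    have h2 : L * s ^ 2 ≤ |L| * s ^ 2 := by gcongr
    have h3 : 0 < s ^ 2 := by positivity
    nlinarith [abs_nonneg L, mul_nonneg (abs_nonneg L) h3.le]
  · have h1 := key r hr0
    have h2 : r * ⟪gradient f x - gradient f y, v⟫ ≤ r * (L * r) := by nlinarith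
    exact le_of_mul_le_mul_left h2 h0

end AbstractPart


lemma exists_fin_vec {α : Type*} {n : ℕ} (s : Multiset α) (hs : Multiset.card s = n) :
    ∃ v : Fin n → α, Multiset.map v Finset.univ.val = s := by
  obtain ⟨l, rfl⟩ : ∃ l : List α, (l : Multiset α) = s := Quot.exists_rep s
  have hl : l.length = n := by simpa using hs
  subst hl
  refine ⟨l.get, ?_⟩
  rw [Fin.univ_val_map]
  simp

/-- The complexified polynomial function. -/
noncomputable def cpoly {d : ℕ} (P : MvPolynomial (Fin d) ℝ) (z : Fin d → ℂ) : ℂ :=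
  MvPolynomial.eval z (MvPolynomial.map (algebraMap ℝ ℂ) P)

section Link

variable {d n : ℕ} (P : MvPolynomial (Fin d) ℝ)

lemma cpoly_cx (x : Fin d → ℝ) : cpoly P (cx x) = (MvPolynomial.eval x P : ℂ) := by
  unfold cpoly cx
  rw [MvPolynomial.eval_map]
  exact (MvPolynomial.eval₂_comp_left (algebraMap ℝ ℂ) (RingHom.id ℝ) x P).symm

lemma cpoly_hom (hP : P.IsHomogeneous n) (a : ℂ) (z : Fin d → ℂ) :
    cpoly P (a • z) = a ^ n * cpoly P z := by
  unfold cpoly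
  rw [MvPolynomial.eval_eq', MvPolynomial.eval_eq', Finset.mul_sum]
  apply Finset.sum_congr rfl
  intro k hk
  have hk' := (hP.map (algebraMap ℝ ℂ)) (MvPolynomial.mem_support_iff.1 hk)
  have hdeg : ∑ i, k i = n := by
    rw [← hk', Finsupp.weight_apply, Finsupp.sum_fintype _ _ (by simp)]
    simp
  simp only [Pi.smul_apply, smul_eq_mul, mul_pow, Finset.prod_mul_distrib, Finset.prod_pow_eq_pow_sum,
    hdeg]
  ring

lemma cpoly_conj (z : Fin d → ℂ) : cpoly P (fun i => star (z i)) = star (cpoly P z) := by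
  unfold cpoly
  rw [MvPolynomial.eval_map, MvPolynomial.eval_map]
  have := MvPolynomial.hom_eval₂ P (algebraMap ℝ ℂ) (starRingEnd ℂ) z
  change _ = (starRingEnd ℂ) _
  rw [this]
  congr 1
  ext x; simp

lemma cpoly_diff : Differentiable ℂ (cpoly P) := by
  unfold cpoly
  simp_rw [MvPolynomial.eval_eq']
  fun_prop

lemma cpoly_split (hP : P.IsHomogeneous n) (e : Fin d → ℂ) (he : cpoly P e ≠ 0) (z : Fin d → ℂ) :
    ∃ v : Fin n → ℂ, RVec (cpoly P) e z v := by
  set Q : Polynomial ℂ := MvPolynomial.aeval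
    (fun i => Polynomial.C (z i) - Polynomial.X * Polynomial.C (e i))
    (MvPolynomial.map (algebraMap ℝ ℂ) P) with hQ
  have hQe : ∀ t, Q.eval t = cpoly P (z - t • e) := by
    intro t
    unfold cpoly
    have h1 := MvPolynomial.hom_eval₂ (MvPolynomial.map (algebraMap ℝ ℂ) P)
      (algebraMap ℂ (Polynomial ℂ)) (Polynomial.evalRingHom t)
      (fun i => Polynomial.C (z i) - Polynomial.X * Polynomial.C (e i))
    rw [hQ, MvPolynomial.aeval_def, ← Polynomial.coe_evalRingHom, h1, MvPolynomial.eval,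
      MvPolynomial.coe_eval₂Hom]
    congr 1
    · ext x; simp
    · funext i; simp; ring
  have hdeg : Q.natDegree ≤ n := by
    have h1 := MvPolynomial.aeval_natDegree_le (MvPolynomial.map (algebraMap ℝ ℂ) P)
      (hP.map (algebraMap ℝ ℂ)).totalDegree_le
      (fun i => Polynomial.C (z i) - Polynomial.X * Polynomial.C (e i)) (n := 1)
      (fun i => by compute_degree)
    rwa [mul_one] at h1
  have hlim : ∀ s : ℂ, (Q.reflect n).eval s = cpoly P (s • z - e) := by
    have hc1 : Continuous (fun s : ℂ => (Q.reflect n).eval s) := Polynomial.continuous _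
    have hc2 : Continuous (fun s : ℂ => cpoly P (s • z - e)) :=
      (cpoly_diff P).continuous.comp (by fun_prop)
    have := Continuous.ext_on (dense_compl_singleton (0 : ℂ)) hc1 hc2 ?_
    · exact fun s => congrFun this s
    · intro s hs
      have hs0 : s ≠ 0 := hs
      let _ : Invertible s⁻¹ := invertibleOfNonzero (inv_ne_zero hs0)
      have h1 := Polynomial.eval₂_reflect_mul_pow (RingHom.id ℂ) s⁻¹ n Q hdeg
      rw [invOf_eq_inv, inv_inv] at h1
      change (Q.reflect n).eval s * s⁻¹ ^ n = Q.eval s⁻¹ at h1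
      have e3 : s • z - e = s • (z - s⁻¹ • e) := by
        rw [smul_sub, smul_smul, mul_inv_cancel₀ hs0, one_smul]
      simp only
      rw [e3, cpoly_hom P hP, ← hQe, ← h1, mul_left_comm, ← mul_pow, mul_inv_cancel₀ hs0, one_pow,
        mul_one]
  have hcoef : Q.coeff n = cpoly P (-e) := by
    have h0 := hlim 0
    rw [← Polynomial.coeff_zero_eq_eval_zero, Polynomial.coeff_reflect] at h0
    simpa using h0
  have hne : cpoly P (-e) = (-1) ^ n * cpoly P e := by
    rw [← cpoly_hom P hP, neg_one_smul]
  have hn0 : Q.coeff n ≠ 0 := by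
    rw [hcoef, hne]
    exact mul_ne_zero (pow_ne_zero _ (by norm_num)) he
  have hnat : Q.natDegree = n := le_antisymm hdeg (Polynomial.le_natDegree_of_ne_zero hn0)
  have hsp := IsAlgClosed.splits Q
  have hcard : Multiset.card Q.roots = n := by
    rw [← hnat]; exact hsp.natDegree_eq_card_roots.symm
  obtain ⟨v, hv⟩ := exists_fin_vec Q.roots hcard
  refine ⟨v, fun t => ?_⟩
  rw [← hQe]
  have h1 := hsp.eq_prod_roots
  rw [← hv, Multiset.map_map] at h1
  conv_lhs => rw [h1]
  change Polynomial.eval t (Polynomial.C Q.leadingCoeff *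
    ∏ j, (Polynomial.X - Polynomial.C (v j))) = _
  rw [Polynomial.leadingCoeff, hnat, hcoef, hne]
  simp only [Polynomial.eval_mul, Polynomial.eval_C, Polynomial.eval_prod, Polynomial.eval_sub,
    Polynomial.eval_X]
  have h3 : ∀ j, v j - t = (-1) * (t - v j) := by intro j; ring
  simp_rw [h3, Finset.prod_mul_distrib]
  simp; ring

lemma rvec_roots (e : Fin d → ℝ) (he : MvPolynomial.eval e P ≠ 0) (x : Fin d → ℝ)
    (q : Polynomial ℝ) (hq : ∀ t, q.eval t = MvPolynomial.eval (fun i => x i - t * e i) P)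
    (hr : Multiset.card q.roots = n) (v : Fin n → ℂ) (hv : RVec (cpoly P) (cx e) (cx x) v) :
    Multiset.map v Finset.univ.val = q.roots.map Complex.ofReal := by
  have he' : cpoly P (cx e) ≠ 0 := by rw [cpoly_cx]; exact_mod_cast he
  set c := cpoly P (cx e) * (-1) ^ n with hc
  have hc0 : c ≠ 0 := mul_ne_zero he' (pow_ne_zero _ (by norm_num))
  have h1 : q.map (algebraMap ℝ ℂ) = Polynomial.C c *
      ((Multiset.map v Finset.univ.val).map (fun a => Polynomial.X - Polynomial.C a)).prod := by
    apply Polynomial.eq_of_infinite_eval_eq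
    refine Set.Infinite.mono ?_ (Set.infinite_range_of_injective Complex.ofReal_injective)
    rintro _ ⟨t, rfl⟩
    simp only [Set.mem_ofPred_eq]
    have e1 : Polynomial.eval (t : ℂ) (q.map (algebraMap ℝ ℂ)) = ((q.eval t : ℝ) : ℂ) := by
      rw [Polynomial.eval_map]
      exact Polynomial.eval₂_at_apply (algebraMap ℝ ℂ) t
    rw [e1, hq, ← cpoly_cx]
    have e2 : cx (fun i => x i - t * e i) = cx x - (t : ℂ) • cx e := by
      funext i; simp [cx]
    rw [e2, hv, Multiset.map_map]
    change _ = Polynomial.eval (t : ℂ) (Polynomial.C c *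
      ∏ j, (Polynomial.X - Polynomial.C (v j)))
    simp only [Polynomial.eval_mul, Polynomial.eval_C, Polynomial.eval_prod, Polynomial.eval_sub,
      Polynomial.eval_X]
    have h3 : ∀ j, v j - t = (-1) * (t - v j) := by intro j; ring
    simp_rw [h3, Finset.prod_mul_distrib]
    simp [hc]; ring
  have h2 := Polynomial.map_roots_le_of_injective q (f := algebraMap ℝ ℂ)
    (algebraMap ℝ ℂ).injective
  rw [h1, Polynomial.roots_C_mul _ hc0, Polynomial.roots_multiset_prod_X_sub_C] at h2
  exact (Multiset.eq_of_le_of_card_le h2 (by simp [hr])).symm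

end Link


lemma hypData_of {d n : ℕ} (P : MvPolynomial (Fin d) ℝ) (hP : P.IsHomogeneous n) (e : Fin d → ℝ)
    (he : MvPolynomial.eval e P ≠ 0) (q : (Fin d → ℝ) → Polynomial ℝ)
    (hq : ∀ x t, (q x).eval t = MvPolynomial.eval (fun i => x i - t * e i) P)
    (hr : ∀ x, Multiset.card (q x).roots = n) : HypData d n (cpoly P) (cx e) := by
  have he' : cpoly P (cx e) ≠ 0 := by rw [cpoly_cx]; exact_mod_cast he
  refine ⟨cpoly_hom P hP, cpoly_diff P, he', cpoly_split P hP _ he', ?_, cpoly_conj P, ?_⟩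
  · intro x v hv j
    have h1 := rvec_roots P e he x (q x) (hq x) (hr x) v hv
    have h2 : v j ∈ Multiset.map v Finset.univ.val := Multiset.mem_map_of_mem v (Finset.mem_univ j)
    rw [h1] at h2
    obtain ⟨a, -, ha⟩ := Multiset.mem_map.1 h2
    rw [← ha]; simp
  · intro i
    exact Complex.conj_ofReal _

namespace HypData

variable {d n : ℕ} {p : (Fin d → ℂ) → ℂ} {e : Fin d → ℂ}

lemma forall_of (h : HypData d n p e) {z : Fin d → ℂ} {v v' : Fin n → ℂ} (hv : RVec p e z v)
    (hv' : RVec p e z v') (A : ℂ → Prop) (hA : ∀ j, A (v j)) (j : Fin n) : A (v' j) := by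
  have h2 : v' j ∈ Multiset.map v' Finset.univ.val := Multiset.mem_map_of_mem v' (Finset.mem_univ j)
  rw [← h.runiq hv hv'] at h2
  obtain ⟨i, -, hi⟩ := Multiset.mem_map.1 h2
  rw [← hi]; exact hA i

lemma bd_smul (h : HypData d n p e) (w : Fin d → ℝ) (ν t : ℝ)
    (hw : ∀ j, |(h.rv (cx w) j).re| ≤ ν) : ∀ j, |(h.rv (cx (t • w)) j).re| ≤ |t| * ν := by
  refine h.forall_of (v := fun j => (t : ℂ) * h.rv (cx w) j)
    (by rw [cx_smul]; exact h.rsmul (h.rv_spec _) _) (h.rv_spec _) (fun a => |a.re| ≤ |t| * ν) ?_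
  intro j
  rw [Complex.re_ofReal_mul, abs_mul]
  exact mul_le_mul_of_nonneg_left (hw j) (abs_nonneg _)

end HypData

lemma add_mem_int {V : Type*} [NormedAddCommGroup V] [NormedSpace ℝ V] (K : Set V)
    (hKconv : Convex ℝ K) (hKcone : ∀ t : ℝ, 0 < t → ∀ x ∈ K, t • x ∈ K) (e : V)
    (he : e ∈ interior K) (k : V) (hk : k ∈ K) (s : ℝ) (hs : 0 < s) : k + s • e ∈ interior K := by
  rw [mem_interior_iff_mem_nhds] at he ⊢
  have hc : Continuous (fun z : V => s⁻¹ • (z - k)) := by fun_prop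
  have ht := hc.tendsto (k + s • e)
  have e1 : s⁻¹ • (k + s • e - k) = e := by
    rw [add_sub_cancel_left, smul_smul, inv_mul_cancel₀ hs.ne', one_smul]
  rw [e1] at ht
  filter_upwards [ht he] with z hz
  have hz' : s⁻¹ • (z - k) ∈ K := hz
  have h1 := hKcone s hs _ hz'
  rw [smul_smul, mul_inv_cancel₀ hs.ne', one_smul] at h1
  have h2 := hKcone 2 two_pos _ (hKconv hk h1 (a := 1 / 2) (b := 1 / 2) (by norm_num) (by norm_num)
    (by norm_num))
  rw [← smul_add, smul_smul, add_sub_cancel] at h2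
  norm_num at h2
  exact h2

lemma nInf_bd {d n : ℕ}
    (K : Set (EuclideanSpace ℝ (Fin d)))
    (hKconv : Convex ℝ K)
    (hKcone : ∀ t : ℝ, 0 < t → ∀ x ∈ K, t • x ∈ K)
    (P : MvPolynomial (Fin d) ℝ)
    (e : EuclideanSpace ℝ (Fin d)) (he : e ∈ interior K)
    (hint : ∀ x ∈ interior K, MvPolynomial.eval (fun i => x i) P ≠ 0)
    (h : HypData d n (cpoly P) (cx (fun i => e i)))
    (w : EuclideanSpace ℝ (Fin d)) :
    0 ≤ sInf {t : ℝ | 0 ≤ t ∧ ∃ v, (e + v ∈ K ∧ e - v ∈ K) ∧ w = t • v} ∧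
    ∀ j, |(h.rv (cx (fun i => w i)) j).re| ≤
      sInf {t : ℝ | 0 ≤ t ∧ ∃ v, (e + v ∈ K ∧ e - v ∈ K) ∧ w = t • v} := by
  have hroot : ∀ (v : EuclideanSpace ℝ (Fin d)) (j : Fin n),
      MvPolynomial.eval (fun i => (v - (h.rv (cx (fun i => v i)) j).re • e) i) P = 0 := by
    intro v j
    set lam := h.rv (cx (fun i => v i)) j with hlam
    have him : lam.im = 0 := h.real _ _ (h.rv_spec _) j
    have hl : lam = (lam.re : ℂ) := Complex.ext (by simp) (by simp [him])
    have h1 : cpoly P (cx (fun i => v i) - lam • cx (fun i => e i)) = 0 := by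
      rw [h.rv_spec _ lam, Finset.prod_eq_zero (Finset.mem_univ j) (sub_self _), mul_zero]
    have e1 : cx (fun i => v i) - lam • cx (fun i => e i)
        = cx (fun i => (v - lam.re • e) i) := by
      rw [hl]
      funext i; simp [cx]
    rw [e1, cpoly_cx] at h1
    exact_mod_cast h1
  have hone : ∀ v, e + v ∈ K → e - v ∈ K → ∀ j, |(h.rv (cx (fun i => v i)) j).re| ≤ 1 := by
    intro v h1 h2 j
    have h0 := hroot v j
    set a := (h.rv (cx (fun i => v i)) j).re with ha
    rw [abs_le]
    constructor
    · by_contra hlt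
      push Not at hlt
      have h3 := hint _ (add_mem_int K hKconv hKcone e he _ h1 (-a - 1) (by linarith))
      apply h3
      have e2 : e + v + (-a - 1) • e = v - a • e := by module
      rw [e2]; exact h0
    · by_contra hlt
      push Not at hlt
      have h3 := hint _ (add_mem_int K hKconv hKcone e he _ h2 (a - 1) (by linarith))
      apply h3
      have e2 : cx (fun i => (e - v + (a - 1) • e) i)
          = (-1 : ℂ) • cx (fun i => (v - a • e) i) := by
        funext i; simp [cx]; ring
      have h5 : cpoly P (cx (fun i => (v - a • e) i)) = 0 := by
        rw [cpoly_cx, h0]; simp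
      have h4 : cpoly P (cx (fun i => (e - v + (a - 1) • e) i)) = 0 := by
        rw [e2, h.hom, h5, mul_zero]
      rw [cpoly_cx] at h4
      exact_mod_cast h4
  have hne : {t : ℝ | 0 ≤ t ∧ ∃ v, (e + v ∈ K ∧ e - v ∈ K) ∧ w = t • v}.Nonempty := by
    rw [mem_interior_iff_mem_nhds] at he
    have t1 : Tendsto (fun s : ℝ => e + s • w) (𝓝 0) (𝓝 e) := by
      have : Continuous (fun s : ℝ => e + s • w) := by fun_prop
      simpa using this.tendsto 0
    have t2 : Tendsto (fun s : ℝ => e - s • w) (𝓝 0) (𝓝 e) := by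
      have : Continuous (fun s : ℝ => e - s • w) := by fun_prop
      simpa using this.tendsto 0
    have hev : ∀ᶠ s : ℝ in 𝓝[>] 0, e + s • w ∈ K ∧ e - s • w ∈ K :=
      ((t1.eventually he).and (t2.eventually he)).filter_mono nhdsWithin_le_nhds
    obtain ⟨s, ⟨h1, h2⟩, hs⟩ := (hev.and self_mem_nhdsWithin).exists
    have hs' : (0 : ℝ) < s := hs
    refine ⟨s⁻¹, by positivity, s • w, ⟨h1, h2⟩, ?_⟩
    rw [smul_smul, inv_mul_cancel₀ hs'.ne', one_smul]
  refine ⟨le_csInf hne fun t ht => ht.1, fun j => le_csInf hne ?_⟩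
  rintro t ⟨ht0, v, ⟨h1, h2⟩, hw⟩
  have h3 := h.bd_smul _ 1 t (hone v h1 h2) j
  have e1 : (t • fun i => v i) = fun i => w i := by
    rw [hw]; funext i; simp
  rw [e1, abs_of_nonneg ht0, mul_one] at h3
  exact h3

theorem smoothing_convex_lipschitz_gradient
    {d n : ℕ} (hn : 0 < n)
    (K : Set (EuclideanSpace ℝ (Fin d)))
    (hKclosed : IsClosed K) (hKconv : Convex ℝ K)
    (hKcone : ∀ t : ℝ, 0 < t → ∀ x ∈ K, t • x ∈ K)
    (P : MvPolynomial (Fin d) ℝ) (hP : P.IsHomogeneous n)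
    (e : EuclideanSpace ℝ (Fin d)) (he : e ∈ interior K)
    (hcomp : interior K =
      connectedComponentIn {x | MvPolynomial.eval (fun i => x i) P ≠ 0} e)
    (q : EuclideanSpace ℝ (Fin d) → Polynomial ℝ)
    (hq : ∀ x t, (q x).eval t = MvPolynomial.eval (fun i => x i - t * e i) P)
    (hroots : ∀ x, Multiset.card (q x).roots = n)
    (nInf : EuclideanSpace ℝ (Fin d) → ℝ)
    (hnInf : ∀ u, nInf u =
      sInf {t : ℝ | 0 ≤ t ∧ ∃ v, (e + v ∈ K ∧ e - v ∈ K) ∧ u = t • v}) :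
    ∀ μ : ℝ, 0 < μ →
      ConvexOn ℝ Set.univ
        (fun x => μ * Real.log (((q x).roots.map (fun lam => Real.exp (lam / μ))).sum)) ∧
      ∀ x y v, nInf v ≤ 1 →
        ⟪gradient (fun x =>
            μ * Real.log (((q x).roots.map (fun lam => Real.exp (lam / μ))).sum)) x -
          gradient (fun x =>
            μ * Real.log (((q x).roots.map (fun lam => Real.exp (lam / μ))).sum)) y,
          v⟫ ≤ μ⁻¹ * nInf (x - y) := by
  intro μ hμ
  have hint : ∀ x ∈ interior K, MvPolynomial.eval (fun i => x i) P ≠ 0 := by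
    intro x hx
    rw [hcomp] at hx
    exact connectedComponentIn_subset _ _ hx
  have hPe := hint e he
  have h : HypData d n (cpoly P) (cx (fun i => e i)) :=
    hypData_of P hP (fun i => e i) hPe (fun x => q (WithLp.toLp 2 x))
      (fun x t => hq _ t) (fun x => hroots _)
  set ι : EuclideanSpace ℝ (Fin d) → (Fin d → ℝ) := fun x i => x i with hι
  have hιc : Continuous ι := by simp only [hι]; fun_prop
  have hfun : (fun x => μ * Real.log (((q x).roots.map (fun lam => Real.exp (lam / μ))).sum))
      = fun x => μ * Real.log (h.Gr (μ⁻¹ • ι x)) := by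
    funext x
    congr 2
    have h1 := rvec_roots P (fun i => e i) hPe (ι x) (q x) (hq x) (hroots x) _ (h.rv_spec (cx (ι x)))
    have h2 : h.Gr (μ⁻¹ • ι x) = ∑ j, Real.exp (((μ⁻¹ : ℝ) : ℂ) * h.rv (cx (ι x)) j).re :=
      h.sum_eq (h.rv_spec _) (by rw [HypData.cx_smul]; exact h.rsmul (h.rv_spec _) _)
        (fun t => Real.exp t.re)
    rw [h2]
    have h3 := congrArg (fun s => (Multiset.map
      (fun t : ℂ => Real.exp (((μ⁻¹ : ℝ) : ℂ) * t).re) s).sum) h1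
    simp only [Multiset.map_map] at h3
    refine Eq.trans ?_ h3.symm
    congr 1
    apply Multiset.map_congr rfl
    intro a _
    simp only [Function.comp]
    rw [← Complex.ofReal_mul, Complex.ofReal_re, div_eq_inv_mul]
  rw [hfun]
  have hconv : ConvexOn ℝ Set.univ (fun x => μ * Real.log (h.Gr (μ⁻¹ • ι x))) := by
    refine ⟨convex_univ, fun x _ y _ a b ha hb hab => ?_⟩
    have h1 := (h.log_convex hn).2 (Set.mem_univ (μ⁻¹ • ι x)) (Set.mem_univ (μ⁻¹ • ι y)) ha hb hab
    have e1 : μ⁻¹ • ι (a • x + b • y) = a • μ⁻¹ • ι x + b • μ⁻¹ • ι y := by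
      funext i; simp [hι]; ring
    simp only [smul_eq_mul] at h1 ⊢
    rw [e1]
    have h2 := mul_le_mul_of_nonneg_left h1 hμ.le
    linarith
  refine ⟨hconv, fun x y v hv => ?_⟩
  have hcont : Continuous (fun x => μ * Real.log (h.Gr (μ⁻¹ • ι x))) := by
    refine continuous_const.mul (Continuous.log ?_ fun x => (h.Gr_pos hn _).ne')
    exact h.Gr_cont.comp (hιc.const_smul μ⁻¹)
  have hb : ∀ w, 0 ≤ nInf w ∧ ∀ j, |(h.rv (cx (ι w)) j).re| ≤ nInf w := by
    intro w
    rw [hnInf]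
    exact nInf_bd K hKconv hKcone P e he hint h w
  obtain ⟨B, hB0, hB⟩ := h.rbound
  refine grad_lip (fun x => μ * Real.log (h.Gr (μ⁻¹ • ι x))) hconv hcont
    (fun w ν => 0 ≤ ν ∧ ∀ j, |(h.rv (cx (ι w)) j).re| ≤ ν) ?_ ?_ B ?_ μ⁻¹ ?_ x y v
    (nInf (x - y)) (hb _).1 (hb _) ⟨zero_le_one, fun j => ((hb v).2 j).trans hv⟩
  · rintro w ν t ht ⟨h0, h1⟩
    refine ⟨by positivity, ?_⟩
    have := h.bd_smul _ ν t h1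
    rw [abs_of_nonneg ht] at this
    exact this
  · rintro w ν ⟨h0, h1⟩
    refine ⟨h0, ?_⟩
    have h2 := h.bd_smul _ ν (-1) h1
    have e1 : (-1 : ℝ) • ι w = ι (-w) := by funext i; simp [hι]
    rw [e1] at h2
    simpa using h2
  · intro w
    refine ⟨by positivity, fun j => ?_⟩
    refine (Complex.abs_re_le_norm _).trans ((hB _ _ (h.rv_spec _) j).trans ?_)
    refine mul_le_mul_of_nonneg_left ?_ hB0
    rw [pi_norm_le_iff_of_nonneg (norm_nonneg _)]
    intro i
    simp only [cx, hι, Complex.norm_real]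
    exact PiLp.norm_apply_le w i
  · rintro x w ν ⟨h0, h1⟩
    have h2 := h.bd_smul _ ν μ⁻¹ h1
    rw [abs_of_pos (inv_pos.2 hμ)] at h2
    have h3 := h.log_mid hn (μ⁻¹ • ι x) (μ⁻¹ • ι w) (μ⁻¹ * ν) (by positivity) h2
    have e1 : μ⁻¹ • ι (x + w) = μ⁻¹ • ι x + μ⁻¹ • ι w := by
      funext i; simp [hι]; ring
    have e2 : μ⁻¹ • ι (x - w) = μ⁻¹ • ι x - μ⁻¹ • ι w := by
      funext i; simp [hι]; ring
    simp only [e1, e2]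
    have h4 := mul_le_mul_of_nonneg_left h3 hμ.le
    have e3 : μ * (μ⁻¹ * ν) ^ 2 = μ⁻¹ * ν ^ 2 := by field_simp
    rw [e3] at h4
    linarith
end

section
/- The function x ↦ Σ_{k=0}^∞ (1/k!) S_k(x), where S_k(x) := Σ_j λ_j(x)^k, is analytic on E; in particular, x ↦ Σ_j exp(λ_j(x)) is analytic. -/
lemma aux_psum_analytic {E : Type*} [NormedAddCommGroup E] [NormedSpace ℝ E] {n : ℕ}
    (r : E → Fin n → ℝ) (z : E)
    (hs : ∀ k, AnalyticAt ℝ (fun x => (Finset.univ.val.map (r x)).esymm k) z) (k : ℕ) :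
    AnalyticAt ℝ (fun x => ∑ i, r x i ^ k) z := by
  induction k using Nat.strong_induction_on with
  | _ k ih =>
    rcases Nat.eq_zero_or_pos k with rfl | hk
    · simp only [pow_zero]; exact analyticAt_const
    · have h : ∀ x, ∑ i, r x i ^ k = (-1) ^ (k + 1) * k * (Finset.univ.val.map (r x)).esymm k -
          ∑ a ∈ Finset.HasAntidiagonal.antidiagonal k with a.1 ∈ Set.Ioo 0 k,
            (-1) ^ a.1 * (Finset.univ.val.map (r x)).esymm a.1 * ∑ i, r x i ^ a.2 := by
        intro x
        have := congrArg (MvPolynomial.aeval (r x))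
          (MvPolynomial.psum_eq_mul_esymm_sub_sum (Fin n) ℝ k hk)
        simp only [← MvPolynomial.aeval_esymm_eq_multiset_esymm (Fin n) ℝ]
        simpa [MvPolynomial.psum, map_sum] using this
      simp_rw [h]
      refine (analyticAt_const.mul (hs k)).sub ?_
      refine Finset.analyticAt_fun_sum _ fun a ha => ?_
      simp only [Finset.mem_filter, Finset.HasAntidiagonal.mem_antidiagonal, Set.mem_Ioo] at ha
      exact (analyticAt_const.mul (hs a.1)).mul (ih a.2 (by omega))

lemma aux_exp_apply {V : Type*} [NormedAddCommGroup V] [NormedSpace ℝ V] [CompleteSpace V]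
    (A : V →L[ℝ] V) (v : V) (l : ℝ) (h : A v = l • v) :
    NormedSpace.exp A v = Real.exp l • v := by
  have h1 := (NormedSpace.exp_series_hasSum_exp' (𝕂 := ℝ) A).mapL
    (ContinuousLinearMap.apply ℝ V v)
  have h2 : HasSum (fun k : ℕ => ((k.factorial : ℝ)⁻¹ • l ^ k) • v) (NormedSpace.exp l • v) :=
    (NormedSpace.exp_series_hasSum_exp' (𝕂 := ℝ) l).smul_const v
  have hp : ∀ k : ℕ, (A ^ k) v = l ^ k • v := by
    intro k
    induction k with
    | zero => simp
    | succ k ih => rw [pow_succ', mul_apply_eq_comp, ih, map_smul, h, smul_smul, pow_succ]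
  rw [Real.exp_eq_exp_ℝ]
  refine HasSum.unique ?_ h2
  convert h1 using 2 with k
  · simp [hp, smul_smul]
  · rfl

lemma aux_companion {E : Type*} [NormedAddCommGroup E] [NormedSpace ℝ E] {n : ℕ} (hn : 0 < n)
    (r : E → Fin n → ℝ) (a : E → Fin n → ℝ) (z : E)
    (ha : ∀ j, AnalyticAt ℝ (fun x => a x j) z)
    (hr : ∀ x i, r x i ^ n = ∑ j : Fin n, a x j * r x i ^ (j : ℕ))
    (hs : ∀ k : ℕ, AnalyticAt ℝ (fun x => ∑ i, r x i ^ k) z) :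
    AnalyticAt ℝ (fun x => ∑ i, Real.exp (r x i)) z := by
  classical
  let N : (Fin n → ℝ) →L[ℝ] (Fin n → ℝ) := ContinuousLinearMap.pi fun i =>
    if h : (i : ℕ) + 1 < n then ContinuousLinearMap.proj (⟨i + 1, h⟩ : Fin n) else 0
  let B : Fin n → ((Fin n → ℝ) →L[ℝ] (Fin n → ℝ)) := fun j => ContinuousLinearMap.pi fun i =>
    if (i : ℕ) + 1 < n then 0 else ContinuousLinearMap.proj j
  let A : E → ((Fin n → ℝ) →L[ℝ] (Fin n → ℝ)) := fun x => N + ∑ j, a x j • B j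
  have hA : AnalyticAt ℝ A z :=
    analyticAt_const.add (Finset.analyticAt_fun_sum _ fun j _ => (ha j).smul analyticAt_const)
  let w : ℝ → Fin n → ℝ := fun l j => l ^ (j : ℕ)
  have hw : ∀ x i, A x (w (r x i)) = r x i • w (r x i) := by
    intro x i
    ext m
    by_cases hm : (m : ℕ) + 1 < n
    · simp [A, N, B, w, hm, pow_succ']
    · have : (m : ℕ) + 1 = n := by omega
      simp [A, N, B, w, hm, ← hr, ← pow_succ', this]
  have hexp : AnalyticAt ℝ (fun x => NormedSpace.exp (A x)) z :=
    (NormedSpace.exp_analytic (𝕂 := ℝ) (A z)).comp hA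
  have hv : AnalyticAt ℝ (fun x => (fun j : Fin n => ∑ i, r x i ^ (j : ℕ))) z :=
    AnalyticAt.pi fun j => hs j
  have hev : AnalyticAt ℝ (fun x => NormedSpace.exp (A x) (fun j : Fin n => ∑ i, r x i ^ (j : ℕ))) z :=
    ((ContinuousLinearMap.id ℝ ((Fin n → ℝ) →L[ℝ] (Fin n → ℝ))).analyticAt_bilinear _).comp
      (hexp.prod hv)
  have hfin := ((ContinuousLinearMap.proj (R := ℝ) (φ := fun _ : Fin n => ℝ)
    (⟨0, hn⟩ : Fin n)).analyticAt _).comp hev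
  convert hfin using 1
  ext x
  have : (fun j : Fin n => ∑ i, r x i ^ (j : ℕ)) = ∑ i, w (r x i) := by
    ext j; simp [w]
  simp only [Function.comp, this, map_sum, aux_exp_apply _ _ _ (hw x _)]
  simp [w]

lemma aux_coeff {d : ℕ} (P : MvPolynomial (Fin d) ℝ) (e : Fin d → ℝ)
    (z : EuclideanSpace ℝ (Fin d)) (k : ℕ) :
    AnalyticAt ℝ (fun x : EuclideanSpace ℝ (Fin d) => (MvPolynomial.aeval
      (fun i => Polynomial.C (x i) - Polynomial.X * Polynomial.C (e i)) P : Polynomial ℝ).coeff k) z := by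
  induction P using MvPolynomial.induction_on generalizing k with
  | C a => simp only [MvPolynomial.aeval_C]; exact analyticAt_const
  | add p q hp hq => simp only [map_add, Polynomial.coeff_add]; exact (hp k).add (hq k)
  | mul_X p i hp =>
    simp only [map_mul, MvPolynomial.aeval_X, Polynomial.coeff_mul]
    refine Finset.analyticAt_fun_sum _ fun m _ => (hp m.1).mul ?_
    simp only [Polynomial.coeff_sub]
    refine AnalyticAt.sub ?_ analyticAt_const
    simp only [Polynomial.coeff_C]
    split_ifs
    · exact (EuclideanSpace.proj (𝕜 := ℝ) i).analyticAt z
    · exact analyticAt_const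


/-- The function `x ↦ Σ_{k=0}^∞ S_k(x)/k!` with `S_k(x) = Σ_j λ_j(x)^k` is analytic
on `E`; in particular `x ↦ Σ_j exp(λ_j(x))` is analytic. -/
theorem sum_exp_eigenvalues_analytic
    {d n : ℕ} (hn : 0 < n)
    (K : Set (EuclideanSpace ℝ (Fin d)))
    (hKclosed : IsClosed K) (hKconv : Convex ℝ K)
    (hKcone : ∀ t : ℝ, 0 < t → ∀ x ∈ K, t • x ∈ K)
    (P : MvPolynomial (Fin d) ℝ) (hP : P.IsHomogeneous n)
    (e : EuclideanSpace ℝ (Fin d)) (he : e ∈ interior K)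
    (hcomp : interior K =
      connectedComponentIn {x | MvPolynomial.eval (fun i => x i) P ≠ 0} e)
    (q : EuclideanSpace ℝ (Fin d) → Polynomial ℝ)
    (hq : ∀ x t, (q x).eval t = MvPolynomial.eval (fun i => x i - t * e i) P)
    (hroots : ∀ x, Multiset.card (q x).roots = n) :
    AnalyticOnNhd ℝ
      (fun x : EuclideanSpace ℝ (Fin d) =>
        ∑' k : ℕ, (1 / (k.factorial : ℝ)) *
          (((q x).roots.map (fun lam => lam ^ k)).sum)) Set.univ ∧
    AnalyticOnNhd ℝ
      (fun x : EuclideanSpace ℝ (Fin d) =>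
        ((q x).roots.map Real.exp).sum) Set.univ := by
  have hqP : ∀ x, q x = MvPolynomial.aeval
      (fun i => Polynomial.C (x i) - Polynomial.X * Polynomial.C (e i)) P := by
    intro x
    refine Polynomial.funext fun t => ?_
    rw [hq, ← Polynomial.coe_evalRingHom, MvPolynomial.aeval_def, MvPolynomial.hom_eval₂]
    have : (Polynomial.evalRingHom t).comp (algebraMap ℝ (Polynomial ℝ)) = RingHom.id ℝ := by
      ext; simp
    rw [this, MvPolynomial.eval₂_id]
    congr 2
    funext i
    simp only [Polynomial.coe_evalRingHom, Polynomial.eval_sub, Polynomial.eval_mul,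
      Polynomial.eval_C, Polynomial.eval_X]
  have hc : ∀ z k, AnalyticAt ℝ (fun x => (q x).coeff k) z := by
    intro z k
    simp_rw [hqP]
    exact aux_coeff P _ z k
  have hdeg : ∀ x, (q x).natDegree = n := by
    intro x
    refine le_antisymm ?_ ((hroots x).symm.le.trans (Polynomial.card_roots' _))
    rw [hqP, ← mul_one n]
    refine MvPolynomial.aeval_natDegree_le P hP.totalDegree_le _ fun i => ?_
    compute_degree
  have hlead : ∀ x, (q x).coeff n ≠ 0 := by
    intro x h
    have h0 : q x = 0 := by
      rw [← Polynomial.leadingCoeff_eq_zero, Polynomial.leadingCoeff, hdeg, h]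
    have := hroots x
    simp [h0] at this
    omega
  have hex : ∀ x, ∃ f : Fin n → ℝ, Finset.univ.val.map f = (q x).roots := by
    intro x
    obtain ⟨l, hl⟩ := Quot.exists_rep (q x).roots
    have hl' : (q x).roots = (l : Multiset ℝ) := hl.symm
    have hlen : l.length = n := by rw [← hroots x, hl']; rfl
    subst hlen
    refine ⟨l.get, ?_⟩
    rw [hl', Fin.univ_val_map, List.ofFn_get]
  choose r hr using hex
  have hes : ∀ z k, AnalyticAt ℝ (fun x => (Finset.univ.val.map (r x)).esymm k) z := by
    intro z k
    by_cases hk : k ≤ n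
    · have h : ∀ x, (Finset.univ.val.map (r x)).esymm k
          = (-1) ^ k * ((q x).coeff (n - k) / (q x).coeff n) := by
        intro x
        have := Polynomial.coeff_eq_esymm_roots_of_card (p := q x) (by rw [hroots, hdeg])
          (k := n - k) (by rw [hdeg]; omega)
        rw [Polynomial.leadingCoeff, hdeg, Nat.sub_sub_self hk] at this
        rw [hr, this]
        have h2 := hlead x
        have h3 : ((-1 : ℝ) ^ k) * (-1) ^ k = 1 := by rw [← mul_pow]; simp
        field_simp
        linear_combination (-(q x).roots.esymm k) * h3
      simp_rw [h]
      exact analyticAt_const.mul ((hc z _).div (hc z _) (hlead z))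
    · have h : ∀ x, (Finset.univ.val.map (r x)).esymm k = 0 := by
        intro x
        rw [Multiset.esymm, Multiset.powersetCard_eq_empty]
        · simp
        · simp; omega
      simp_rw [h]
      exact analyticAt_const
  have hrec : ∀ x i, r x i ^ n
      = ∑ j : Fin n, (-((q x).coeff j / (q x).coeff n)) * r x i ^ (j : ℕ) := by
    intro x i
    have hmem : r x i ∈ (q x).roots := by
      rw [← hr]; exact Multiset.mem_map_of_mem _ (Finset.mem_univ i)
    have h0 := (Polynomial.mem_roots'.1 hmem).2
    rw [Polynomial.IsRoot, Polynomial.eval_eq_sum_range, hdeg, Finset.sum_range_succ,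
      ← Fin.sum_univ_eq_sum_range (fun j => (q x).coeff j * r x i ^ j)] at h0
    have h2 := hlead x
    have : ∑ j : Fin n, (-((q x).coeff j / (q x).coeff n)) * r x i ^ (j : ℕ)
        = -(∑ j : Fin n, (q x).coeff j * r x i ^ (j : ℕ)) / (q x).coeff n := by
      rw [neg_div, Finset.sum_div, ← Finset.sum_neg_distrib]
      exact Finset.sum_congr rfl fun j _ => by ring
    rw [this, eq_div_iff h2]
    linarith
  have main : AnalyticOnNhd ℝ
      (fun x : EuclideanSpace ℝ (Fin d) => ((q x).roots.map Real.exp).sum) Set.univ := by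
    intro z _
    have h : ∀ x, ((q x).roots.map Real.exp).sum = ∑ i, Real.exp (r x i) := by
      intro x
      rw [← hr, Multiset.map_map]; rfl
    simp_rw [h]
    exact aux_companion hn r (fun x j => -((q x).coeff j / (q x).coeff n)) z
      (fun j => ((hc z _).div (hc z _) (hlead z)).neg) hrec (aux_psum_analytic r z (hes z))
  refine ⟨?_, main⟩
  convert main using 2 with x
  have h1 : ∀ k : ℕ, (1 / (k.factorial : ℝ)) * ((q x).roots.map (fun lam => lam ^ k)).sum
      = ∑ i, ((k.factorial : ℝ)⁻¹ • r x i ^ k) := by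
    intro k
    rw [← hr, Multiset.map_map, ← Finset.smul_sum, one_div]; rfl
  simp_rw [h1]
  rw [← hr, Multiset.map_map]
  refine HasSum.tsum_eq (hasSum_sum fun i _ => ?_)
  rw [Function.comp, Real.exp_eq_exp_ℝ]
  exact NormedSpace.exp_series_hasSum_exp' (𝕂 := ℝ) (r x i)
end
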